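/- arXiv:1604.02558 — 11 statements merged into one kernel-verified Lean document; each statement's English description precedes it below -/
import Mathlib

section
/- Let C ∈ ℝ with V'(C) = 0 and V''(C) ≠ 0, and let θ be the constant function θ(s) = C on [a,b], which is a stationary solution of θ'' + V'(θ) = 0 with natural boundary conditions θ'(a) = θ'(b) = 0. Then θ is a directional local minimum of the energy functional E with A = 0 (i.e., for every Neumann-admissible τ there exists M > 0 such that E[θ + ε·τ] > E[θ] for all ε with 0 < |ε| ≤ M) if and only if V''(C) < 0. -/
theorem strict_max_aux (V : ℝ → ℝ) (hV : ContDiff ℝ 2 V)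
    (C : ℝ) (hC1 : deriv V C = 0) (h : deriv (deriv V) C < 0) :
    ∃ δ > 0, ∀ x, |x - C| < δ → x ≠ C → V x < V C := by
  have hd : Differentiable ℝ V := hV.differentiable (by norm_num)
  have hdd : Differentiable ℝ (deriv V) :=
    (contDiff_succ_iff_deriv (n := 1) |>.1 (by rw [one_add_one_eq_two]; exact hV)).2.2.differentiable (by norm_num)
  set k := -deriv (deriv V) C / 4 with hk
  have hkpos : 0 < k := by rw [hk]; linarith
  have e1 : deriv (fun x => -(V x + k * (x - C) ^ 2)) =
      fun x => -(deriv V x + k * (2 * (x - C))) := by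
    funext x
    have h1 : HasDerivAt (fun x => -(V x + k * (x - C) ^ 2))
        (-(deriv V x + k * (((2:ℕ):ℝ) * (x - C) ^ (2 - 1) * 1))) x :=
      ((hd x).hasDerivAt.add ((((hasDerivAt_id x).sub_const C).pow 2).const_mul k)).neg
    rw [h1.deriv]; norm_num
  have e2 : deriv (deriv (fun x => -(V x + k * (x - C) ^ 2))) C =
      -(deriv (deriv V) C + k * 2) := by
    rw [e1]
    have h1 : HasDerivAt (fun x => -(deriv V x + k * (2 * (x - C))))
        (-(deriv (deriv V) C + k * (2 * 1))) C :=
      ((hdd C).hasDerivAt.add ((((hasDerivAt_id C).sub_const C).const_mul 2).const_mul k)).neg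
    rw [h1.deriv]; norm_num
  have hmin : IsLocalMin (fun x => -(V x + k * (x - C) ^ 2)) C := by
    apply isLocalMin_of_deriv_deriv_pos
    · rw [e2, hk]; linarith
    · rw [e1]; simp [hC1]
    · have := hd.continuous
      fun_prop
  obtain ⟨δ, hδ, H⟩ := Metric.eventually_nhds_iff.1 hmin
  refine ⟨δ, hδ, fun x hx hne => ?_⟩
  have h2 := H (y := x) (by rwa [Real.dist_eq])
  have h3 : 0 < k * (x - C) ^ 2 := by
    have := sub_ne_zero.2 hne
    positivity
  simp only [sub_self] at h2
  nlinarith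

theorem stmt_2 (a b : ℝ) (hab : a < b) (V : ℝ → ℝ) (hV : ContDiff ℝ 2 V)
    (C : ℝ) (hC1 : deriv V C = 0) (hC2 : deriv (deriv V) C ≠ 0) :
    ((∀ τ τ' : ℝ → ℝ,
        (∀ s ∈ Set.Icc a b, HasDerivAt τ (τ' s) s) →
        ContinuousOn τ' (Set.Icc a b) →
        (∃ s ∈ Set.Icc a b, τ s ≠ 0) →
        τ' a = 0 → τ' b = 0 →
        ∃ M > 0, ∀ ε : ℝ, 0 < |ε| → |ε| ≤ M →
          (∫ s in a..b, ((ε * τ' s) ^ 2 / 2 - V (C + ε * τ s))) >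
            ∫ s in a..b, (0 ^ 2 / 2 - V C)) ↔
      deriv (deriv V) C < 0) := by
  have hVc : Continuous V := hV.continuous
  constructor
  · intro H
    by_contra hn
    have hpos : 0 < deriv (deriv V) C := lt_of_le_of_ne (not_lt.1 hn) (Ne.symm hC2)
    have hmin := isLocalMin_of_deriv_deriv_pos hpos hC1 hVc.continuousAt
    obtain ⟨δ, hδ, H2⟩ := Metric.eventually_nhds_iff.1 hmin
    obtain ⟨M, hM, H3⟩ := H (fun _ => 1) (fun _ => 0) (fun s _ => hasDerivAt_const s 1)
      continuousOn_const ⟨a, Set.left_mem_Icc.2 hab.le, one_ne_zero⟩ rfl rfl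
    have hm : 0 < min M (δ / 2) := lt_min hM (by linarith)
    have h4 := H3 (min M (δ / 2)) (abs_pos.2 hm.ne') (by rw [abs_of_pos hm]; exact min_le_left _ _)
    have h5 := H2 (y := C + min M (δ / 2)) (by
      rw [Real.dist_eq, add_sub_cancel_left, abs_of_pos hm]
      linarith [min_le_right M (δ / 2)])
    simp only [intervalIntegral.integral_const, smul_eq_mul, mul_one, mul_zero] at h4
    have := lt_of_mul_lt_mul_left h4 (by linarith)
    linarith
  · intro h τ τ' hτ hτ' hne _ _
    obtain ⟨δ, hδ, H⟩ := strict_max_aux V hV C hC1 h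
    have hτc : ContinuousOn τ (Set.Icc a b) := fun s hs => (hτ s hs).continuousAt.continuousWithinAt
    obtain ⟨K, hK⟩ := isCompact_Icc.exists_bound_of_continuousOn hτc
    have hK0 : 0 ≤ K := (norm_nonneg _).trans (hK a (Set.left_mem_Icc.2 hab.le))
    refine ⟨δ / (K + 1), by positivity, fun ε hε hεM => ?_⟩
    have key : ∀ s ∈ Set.Icc a b, τ s ≠ 0 → V (C + ε * τ s) < V C := by
      intro s hs h0
      apply H
      · rw [add_sub_cancel_left, abs_mul]
        have h1 := hK s hs
        rw [Real.norm_eq_abs] at h1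
        rw [le_div_iff₀ (by positivity)] at hεM
        nlinarith
      · simpa using ⟨abs_pos.1 hε, h0⟩
    have key2 : ∀ s ∈ Set.Icc a b, V (C + ε * τ s) ≤ V C := by
      intro s hs
      by_cases h0 : τ s = 0
      · simp [h0]
      · exact (key s hs h0).le
    obtain ⟨c, hc, hc0⟩ := hne
    apply intervalIntegral.integral_lt_integral_of_continuousOn_of_le_of_exists_lt hab
    · exact continuousOn_const
    · exact (((continuousOn_const.mul hτ').pow 2).div_const 2).sub
        (hVc.comp_continuousOn (continuousOn_const.add (continuousOn_const.mul hτc)))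
    · intro s hs
      have := key2 s (Set.Ioc_subset_Icc_self hs)
      have := sq_nonneg (ε * τ' s)
      linarith
    · refine ⟨c, hc, ?_⟩
      have := key c hc hc0
      have := sq_nonneg (ε * τ' c)
      linarith
end

section
/- Let θ ∈ C²([a,b],ℝ) satisfy θ''(s) + V'(θ(s)) = 0 for all s ∈ [a,b], and suppose θ'(s) ≠ 0 for every s ∈ [a,b] (the phase-plane trajectory of θ never crosses the horizontal axis, i.e., the index I equals 0). Then there exists k > 0 such that for every τ ∈ C¹([a,b],ℝ) with τ(a) = τ(b) = 0, ∫_a^b (τ'(s)² − V''(θ(s))·τ(s)²) ds ≥ k·∫_a^b τ(s)² ds. -/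
theorem stmt_5 (a b : ℝ) (hab : a < b) (V : ℝ → ℝ) (hV : ContDiff ℝ 2 V)
    (θ θ' θ'' : ℝ → ℝ)
    (hθ1 : ∀ s ∈ Set.Icc a b, HasDerivAt θ (θ' s) s)
    (hθ2 : ∀ s ∈ Set.Icc a b, HasDerivAt θ' (θ'' s) s)
    (hθc : ContinuousOn θ'' (Set.Icc a b))
    (hEL : ∀ s ∈ Set.Icc a b, θ'' s + deriv V (θ s) = 0)
    (hI0 : ∀ s ∈ Set.Icc a b, θ' s ≠ 0) :
    ∃ k > 0, ∀ τ τ' : ℝ → ℝ,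
      (∀ s ∈ Set.Icc a b, HasDerivAt τ (τ' s) s) →
      ContinuousOn τ' (Set.Icc a b) →
      τ a = 0 → τ b = 0 →
      (∫ s in a..b, (τ' s ^ 2 - deriv (deriv V) (θ s) * τ s ^ 2)) ≥
        k * ∫ s in a..b, τ s ^ 2 := by
  have hθcont : ContinuousOn θ (Set.Icc a b) := fun s hs => (hθ1 s hs).continuousAt.continuousWithinAt
  have hucont : ContinuousOn θ' (Set.Icc a b) := fun s hs => (hθ2 s hs).continuousAt.continuousWithinAt
  have hV1 : ContDiff ℝ 1 (deriv V) := by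
    have h : ContDiff ℝ (1 + 1) V := by convert hV using 1; norm_num
    exact (contDiff_succ_iff_deriv.1 h).2.2
  have hV2 : Continuous (deriv (deriv V)) := hV1.continuous_deriv le_rfl
  have hvcont : ContinuousOn (fun s => deriv V (θ s)) (Set.Icc a b) :=
    hV1.continuous.comp_continuousOn hθcont
  have hqcont : ContinuousOn (fun s => deriv (deriv V) (θ s)) (Set.Icc a b) :=
    hV2.comp_continuousOn hθcont
  have hne : (Set.Icc a b).Nonempty := Set.nonempty_Icc.2 hab.le
  obtain ⟨s0, hs0, hmin⟩ := isCompact_Icc.exists_isMinOn hne (hucont.pow 2)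
  obtain ⟨s1, hs1, hmax⟩ := isCompact_Icc.exists_isMaxOn hne (hucont.pow 2)
  obtain ⟨m, hm⟩ : ∃ m, m = θ' s0 ^ 2 := ⟨_, rfl⟩
  obtain ⟨M, hM⟩ : ∃ M, M = θ' s1 ^ 2 := ⟨_, rfl⟩
  have hm0 : 0 < m := by rw [hm]; have := hI0 s0 hs0; positivity
  have hM0 : 0 < M := by rw [hM]; have := hI0 s1 hs1; positivity
  have hmle : ∀ s ∈ Set.Icc a b, m ≤ θ' s ^ 2 := fun s hs => by rw [hm]; exact hmin hs
  have hMle : ∀ s ∈ Set.Icc a b, θ' s ^ 2 ≤ M := fun s hs => by rw [hM]; exact hmax hs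
  have hba : 0 < b - a := sub_pos.2 hab
  obtain ⟨ε, hε⟩ : ∃ ε, ε = m / (2 * (b - a) ^ 2) := ⟨_, rfl⟩
  have hε0 : 0 < ε := by rw [hε]; positivity
  have hεm : ε * (b - a) ^ 2 = m / 2 := by rw [hε]; field_simp
  refine ⟨ε / (2 * M), by positivity, ?_⟩
  intro τ τ' hτ hτ'c ha hb
  have hτc : ContinuousOn τ (Set.Icc a b) := fun s hs => (hτ s hs).continuousAt.continuousWithinAt
  -- the Riccati function and its derivative
  let p : ℝ → ℝ := fun s => -(deriv V (θ s)) / θ' s - ε * (s - a) / θ' s ^ 2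
  let p' : ℝ → ℝ := fun s => -deriv (deriv V) (θ s) - deriv V (θ s) ^ 2 / θ' s ^ 2 - ε / θ' s ^ 2
    - 2 * ε * (s - a) * deriv V (θ s) / θ' s ^ 3
  have hp : ∀ s ∈ Set.Icc a b, HasDerivAt p (p' s) s := by
    intro s hs
    have hu := hI0 s hs
    have h2 : HasDerivAt θ' (-(deriv V (θ s))) s := by
      have := hθ2 s hs
      rwa [show θ'' s = -(deriv V (θ s)) by linarith [hEL s hs]] at this
    have hv : HasDerivAt (fun s => deriv V (θ s)) (deriv (deriv V) (θ s) * θ' s) s :=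
      ((hV1.differentiable (by norm_num)) (θ s)).hasDerivAt.comp s (hθ1 s hs)
    have hl : HasDerivAt (fun s => ε * (s - a)) (ε * 1) s :=
      ((hasDerivAt_id s).sub_const a).const_mul ε
    refine ((hv.neg.div h2 hu).sub (hl.div (h2.pow 2) (pow_ne_zero 2 hu))).congr_deriv ?_
    simp only [p', Pi.neg_apply, Pi.pow_apply]
    field_simp
    ring
  have hpc : ContinuousOn p (Set.Icc a b) := fun s hs => (hp s hs).continuousAt.continuousWithinAt
  have hp'c : ContinuousOn p' (Set.Icc a b) := by
    have hn : ∀ n : ℕ, ∀ s ∈ Set.Icc a b, θ' s ^ n ≠ 0 := fun n s hs => pow_ne_zero n (hI0 s hs)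
    refine ((hqcont.neg.sub ((hvcont.pow 2).div (hucont.pow 2) (hn 2))).sub
      (continuousOn_const.div (hucont.pow 2) (hn 2))).sub
      (ContinuousOn.div (ContinuousOn.mul (by fun_prop) hvcont) (hucont.pow 3) (hn 3))
  let F' : ℝ → ℝ := fun s => p' s * τ s ^ 2 + p s * (2 * τ s * τ' s)
  have hF'c : ContinuousOn F' (Set.Icc a b) := by fun_prop
  have hIcc : Set.uIcc a b = Set.Icc a b := Set.uIcc_of_le hab.le
  have hF'i : IntervalIntegrable F' MeasureTheory.volume a b :=
    ContinuousOn.intervalIntegrable (by rwa [hIcc])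
  have hFint : ∫ s in a..b, F' s = 0 := by
    rw [intervalIntegral.integral_eq_sub_of_hasDerivAt (f := fun s => p s * τ s ^ 2) _ hF'i]
    · simp [ha, hb]
    · intro s hs
      rw [hIcc] at hs
      refine ((hp s hs).mul ((hτ s hs).pow 2)).congr_deriv ?_
      simp [F']
  have hQi : IntervalIntegrable (fun s => τ' s ^ 2 - deriv (deriv V) (θ s) * τ s ^ 2)
      MeasureTheory.volume a b := by
    apply ContinuousOn.intervalIntegrable
    rw [hIcc]
    exact (hτ'c.pow 2).sub (hqcont.mul (hτc.pow 2))
  have hτi : IntervalIntegrable (fun s => ε / (2 * M) * τ s ^ 2) MeasureTheory.volume a b := by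
    apply ContinuousOn.intervalIntegrable
    rw [hIcc]
    fun_prop
  have key : ∫ s in a..b, (ε / (2 * M) * τ s ^ 2 + F' s) ≤
      ∫ s in a..b, (τ' s ^ 2 - deriv (deriv V) (θ s) * τ s ^ 2) := by
    refine intervalIntegral.integral_mono_on hab.le (hτi.add hF'i) hQi ?_
    intro s hs
    have hu := hI0 s hs
    have hu2 : 0 < θ' s ^ 2 := by positivity
    have hR : p' s + p s ^ 2 + deriv (deriv V) (θ s)
        = -(ε / θ' s ^ 2) + ε ^ 2 * (s - a) ^ 2 / (θ' s ^ 2) ^ 2 := by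
      simp only [p, p']
      field_simp
      ring
    have h1 : ε * (s - a) ^ 2 ≤ θ' s ^ 2 / 2 := by
      have h3 : (s - a) ^ 2 ≤ (b - a) ^ 2 :=
        pow_le_pow_left₀ (by linarith [hs.1]) (by linarith [hs.2]) 2
      nlinarith [hmle s hs]
    have h2 : ε ^ 2 * (s - a) ^ 2 / (θ' s ^ 2) ^ 2 ≤ ε / θ' s ^ 2 / 2 := by
      rw [div_div, div_le_div_iff₀ (by positivity) (by positivity)]
      have := mul_le_mul_of_nonneg_left h1 (show 0 ≤ ε * θ' s ^ 2 * 2 by positivity)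
      nlinarith
    have h3 : ε / (2 * M) ≤ ε / θ' s ^ 2 / 2 := by
      rw [div_div]
      exact div_le_div_of_nonneg_left hε0.le (by positivity) (by linarith [hMle s hs])
    have h4 : p' s + p s ^ 2 + deriv (deriv V) (θ s) ≤ -(ε / (2 * M)) := by linarith
    have h5 := mul_le_mul_of_nonneg_right h4 (sq_nonneg (τ s))
    have h6 := sq_nonneg (τ' s - p s * τ s)
    simp only [F']
    nlinarith
  rw [intervalIntegral.integral_add hτi hF'i, hFint, add_zero,
    intervalIntegral.integral_const_mul] at key
  exact key
end

section
/- Let θ ∈ C²([a,b],ℝ) satisfy θ''(s) + V'(θ(s)) = 0 for all s ∈ [a,b], let c ∈ (a,b] be such that θ'(c) = 0, θ'(s) ≠ 0 for all s ∈ [a,b] with s ≠ c, and V'(θ(c)) ≠ 0. Fix d ∈ [a,c) and define μ(s) = θ'(s)·∫_d^s (1/θ'(t)²) dt for s ∈ [d,c). Then μ(s) tends to 1/V'(θ(c)) as s tends to c from the left; in particular the limit does not depend on d. -/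
theorem stmt_7 (a b : ℝ) (hab : a < b) (V : ℝ → ℝ) (hV : ContDiff ℝ 2 V)
    (θ θ' θ'' : ℝ → ℝ)
    (hθ1 : ∀ s ∈ Set.Icc a b, HasDerivAt θ (θ' s) s)
    (hθ2 : ∀ s ∈ Set.Icc a b, HasDerivAt θ' (θ'' s) s)
    (hθc : ContinuousOn θ'' (Set.Icc a b))
    (hEL : ∀ s ∈ Set.Icc a b, θ'' s + deriv V (θ s) = 0)
    (c : ℝ) (hc : c ∈ Set.Ioc a b) (hzc : θ' c = 0)
    (hnz : ∀ s ∈ Set.Icc a b, s ≠ c → θ' s ≠ 0)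
    (hVc : deriv V (θ c) ≠ 0)
    (d : ℝ) (hd : d ∈ Set.Ico a c) :
    Filter.Tendsto (fun s => θ' s * ∫ t in d..s, 1 / (θ' t) ^ 2)
      (nhdsWithin c (Set.Ico d c)) (nhds (1 / deriv V (θ c))) := by
  have hcI : c ∈ Set.Icc a b := ⟨hc.1.le, hc.2⟩
  have hdV : ContDiff ℝ 1 (deriv V) := by
    have h : ContDiff ℝ (1 + 1) V := by simpa [one_add_one_eq_two] using hV
    exact (contDiff_succ_iff_deriv.1 h).2.2
  have hdVd : ∀ x, HasDerivAt (deriv V) (deriv (deriv V) x) x := fun x =>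
    (hdV.differentiable (by norm_num) x).hasDerivAt
  have hddV : Continuous (deriv (deriv V)) := hdV.continuous_deriv (by norm_num)
  have hg : ∀ s ∈ Set.Icc a b,
      HasDerivAt (fun s => deriv V (θ s)) (deriv (deriv V) (θ s) * θ' s) s := fun s hs =>
    (hdVd (θ s)).comp s (hθ1 s hs)
  have hgc := (hg c hcI).continuousAt
  -- choose e
  obtain ⟨e, hde, hec, hge⟩ : ∃ e, d ≤ e ∧ e < c ∧ ∀ s ∈ Set.Icc e c, deriv V (θ s) ≠ 0 := by
    have h1 := hgc.eventually_ne hVc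
    obtain ⟨ε, hε, h⟩ := Metric.eventually_nhds_iff.1 h1
    refine ⟨max d (c - ε / 2), le_max_left _ _, max_lt hd.2 (by linarith), fun s hs => h ?_⟩
    have := (le_max_right d (c - ε / 2)).trans hs.1
    rw [Real.dist_eq, abs_lt]
    constructor <;> linarith [hs.2]
  have hsub : Set.Icc e c ⊆ Set.Icc a b := fun s hs =>
    ⟨hd.1.trans (hde.trans hs.1), hs.2.trans hc.2⟩
  have hθ'c : ContinuousOn θ' (Set.Icc a b) := fun s hs =>
    (hθ2 s hs).continuousAt.continuousWithinAt
  have hint : ∀ u v, d ≤ u → u ≤ v → v < c →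
      IntervalIntegrable (fun t => 1 / (θ' t) ^ 2) MeasureTheory.volume u v := by
    intro u v hu huv hv
    apply ContinuousOn.intervalIntegrable
    rw [Set.uIcc_of_le huv]
    have hs : Set.Icc u v ⊆ Set.Icc a b := fun s hs =>
      ⟨hd.1.trans (hu.trans hs.1), hs.2.trans (hv.le.trans hc.2)⟩
    refine continuousOn_const.div ((hθ'c.mono hs).pow 2) fun t ht => ?_
    exact pow_ne_zero 2 (hnz t (hs ht) (ht.2.trans_lt hv).ne)
  set h : ℝ → ℝ := fun t => deriv (deriv V) (θ t) / (deriv V (θ t)) ^ 2 with hh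
  have hhc : ContinuousOn h (Set.Icc e c) := by
    refine ContinuousOn.div (fun s hs => ?_) (fun s hs => ?_) (fun s hs => pow_ne_zero 2 (hge s hs))
    · exact (hddV.continuousAt.comp (hθ1 s (hsub hs)).continuousAt).continuousWithinAt
    · exact ((hg s (hsub hs)).continuousAt.pow 2).continuousWithinAt
  have hformula : ∀ s ∈ Set.Ico e c, ∫ t in e..s, 1 / (θ' t) ^ 2 =
      1 / (deriv V (θ s) * θ' s) - 1 / (deriv V (θ e) * θ' e) + ∫ t in e..s, h t := by
    intro s hs
    have hih : IntervalIntegrable h MeasureTheory.volume e s := by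
      apply ContinuousOn.intervalIntegrable
      rw [Set.uIcc_of_le hs.1]
      exact hhc.mono (Set.Icc_subset_Icc_right hs.2.le)
    have hi := hint e s hde hs.1 hs.2
    have key := intervalIntegral.integral_eq_sub_of_hasDerivAt (a := e) (b := s)
      (f := fun s => 1 / (deriv V (θ s) * θ' s)) (f' := fun t => 1 / (θ' t) ^ 2 - h t)
      (fun t ht => by
        rw [Set.uIcc_of_le hs.1] at ht
        have htI : t ∈ Set.Icc e c := ⟨ht.1, ht.2.trans hs.2.le⟩
        have n1 := hge t htI
        have n2 := hnz t (hsub htI) (ht.2.trans_lt hs.2).ne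
        have hd1 := ((hg t (hsub htI)).mul (hθ2 t (hsub htI))).inv (mul_ne_zero n1 n2)
        have e1 : θ'' t = - deriv V (θ t) := by linarith [hEL t (hsub htI)]
        simp only [one_div]
        refine hd1.congr_deriv ?_
        rw [e1, hh]
        simp only [Pi.mul_apply]
        field_simp
        ring) (hi.sub hih)
    rw [intervalIntegral.integral_sub hi hih] at key
    linarith
  set K : ℝ := (∫ t in d..e, 1 / (θ' t) ^ 2) - 1 / (deriv V (θ e) * θ' e) with hK
  have hle : nhdsWithin c (Set.Ico d c) ≤ nhdsWithin c (Set.Icc e c) := by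
    rw [nhdsWithin_Ico_eq_nhdsLT hd.2, ← nhdsWithin_Ico_eq_nhdsLT hec]
    exact nhdsWithin_mono _ Set.Ico_subset_Icc_self
  have hprim : Filter.Tendsto (fun s => ∫ t in e..s, h t) (nhdsWithin c (Set.Ico d c))
      (nhds (∫ t in e..c, h t)) := by
    have := intervalIntegral.continuousOn_primitive_interval (a := e) (b := c) (f := h)
      (μ := MeasureTheory.volume)
      (by rw [Set.uIcc_of_le hec.le]; exact hhc.integrableOn_Icc)
    rw [Set.uIcc_of_le hec.le] at this
    exact (this c ⟨hec.le, le_rfl⟩).mono_left hle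
  have hθ't : Filter.Tendsto θ' (nhdsWithin c (Set.Ico d c)) (nhds 0) := by
    have := (hθ2 c hcI).continuousAt.tendsto
    rw [hzc] at this
    exact this.mono_left nhdsWithin_le_nhds
  have hgt : Filter.Tendsto (fun s => 1 / deriv V (θ s)) (nhdsWithin c (Set.Ico d c))
      (nhds (1 / deriv V (θ c))) :=
    (tendsto_const_nhds.div hgc.tendsto hVc).mono_left nhdsWithin_le_nhds
  have hlim := hgt.add (hθ't.mul (hprim.const_add K))
  rw [zero_mul, add_zero] at hlim
  refine hlim.congr' ?_
  have hev : ∀ᶠ s in nhdsWithin c (Set.Ico d c), s ∈ Set.Ico e c := by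
    rw [nhdsWithin_Ico_eq_nhdsLT hd.2, ← nhdsWithin_Ico_eq_nhdsLT hec]
    exact self_mem_nhdsWithin
  filter_upwards [hev] with s hs
  have n1 := hge s ⟨hs.1, hs.2.le⟩
  have n2 := hnz s (hsub ⟨hs.1, hs.2.le⟩) hs.2.ne
  rw [← intervalIntegral.integral_add_adjacent_intervals (hint d e le_rfl hde hec)
    (hint e s hde hs.1 hs.2), hformula s hs]
  have : θ' s * (1 / (deriv V (θ s) * θ' s)) = 1 / deriv V (θ s) := by field_simp
  rw [← this, hK]
  ring
end

section
/- Let θ ∈ C²([a,b],ℝ) satisfy θ''(s) + V'(θ(s)) = 0 for all s ∈ [a,b], let c ∈ (a,b] be the unique point of [a,b] with θ'(c) = 0, and assume V'(θ(c)) ≠ 0. Let h₁ ∈ C²([a,b],ℝ) be the solution of −h₁''(s) − V''(θ(s))·h₁(s) = 0 with h₁(a) = 0 and h₁'(a) = 1. Then h₁(s) ≠ 0 for every s ∈ (a,c]. -/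
theorem stmt_8 (a b : ℝ) (hab : a < b) (V : ℝ → ℝ) (hV : ContDiff ℝ 2 V)
    (θ θ' θ'' : ℝ → ℝ)
    (hθ1 : ∀ s ∈ Set.Icc a b, HasDerivAt θ (θ' s) s)
    (hθ2 : ∀ s ∈ Set.Icc a b, HasDerivAt θ' (θ'' s) s)
    (hθc : ContinuousOn θ'' (Set.Icc a b))
    (hEL : ∀ s ∈ Set.Icc a b, θ'' s + deriv V (θ s) = 0)
    (c : ℝ) (hc : c ∈ Set.Ioc a b) (hzc : θ' c = 0)
    (huniq : ∀ s ∈ Set.Icc a b, θ' s = 0 → s = c)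
    (hVc : deriv V (θ c) ≠ 0)
    (h₁ h₁' h₁'' : ℝ → ℝ)
    (hh1 : ∀ s ∈ Set.Icc a b, HasDerivAt h₁ (h₁' s) s)
    (hh2 : ∀ s ∈ Set.Icc a b, HasDerivAt h₁' (h₁'' s) s)
    (hhc : ContinuousOn h₁'' (Set.Icc a b))
    (hode : ∀ s ∈ Set.Icc a b, -h₁'' s - deriv (deriv V) (θ s) * h₁ s = 0)
    (hinit0 : h₁ a = 0) (hinit1 : h₁' a = 1) :
    ∀ s ∈ Set.Ioc a c, h₁ s ≠ 0 := by
  intro s hs hs0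
  have hd : Differentiable ℝ (deriv V) := by
    have h2 : ContDiff ℝ (1 + 1) V := by
      convert hV using 1
      norm_num
    exact ((contDiff_succ_iff_deriv.1 h2).2.2).differentiable (by norm_num)
  have hW : ∀ x ∈ Set.Icc a b,
      HasDerivAt (fun x => h₁' x * θ' x + h₁ x * deriv V (θ x)) 0 x := by
    intro x hx
    have hc1 : HasDerivAt (fun x => deriv V (θ x)) (deriv (deriv V) (θ x) * θ' x) x :=
      HasDerivAt.comp x (hd (θ x)).hasDerivAt (hθ1 x hx)
    have hm := ((hh2 x hx).mul (hθ2 x hx)).add ((hh1 x hx).mul hc1)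
    refine hm.congr_deriv ?_
    linear_combination (-(θ' x)) * hode x hx + h₁' x * hEL x hx
  have hconst : ∀ x ∈ Set.Icc a b, h₁' x * θ' x + h₁ x * deriv V (θ x) = θ' a := by
    intro x hx
    have := constant_of_has_deriv_right_zero
      (f := fun x => h₁' x * θ' x + h₁ x * deriv V (θ x)) (a := a) (b := b)
      (fun y hy => (hW y hy).continuousAt.continuousWithinAt)
      (fun y hy => (hW y ⟨hy.1, hy.2.le⟩).hasDerivWithinAt) x hx
    simpa [hinit0, hinit1] using this
  have hane : θ' a ≠ 0 := fun h => hc.1.ne (huniq a ⟨le_rfl, hab.le⟩ h)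
  have hsc : s ≠ c := by
    rintro rfl
    have := hconst s ⟨hc.1.le, hc.2⟩
    rw [hs0, hzc] at this
    apply hane
    rw [← this]
    ring
  have hlt : s < c := lt_of_le_of_ne hs.2 hsc
  have hne : ∀ x ∈ Set.Icc a s, θ' x ≠ 0 := fun x hx h =>
    (lt_of_le_of_lt hx.2 hlt).ne (huniq x ⟨hx.1, hx.2.trans (hlt.le.trans hc.2)⟩ h)
  have hq : ∀ x ∈ Set.Icc a s, HasDerivAt (fun x => h₁ x / θ' x) (θ' a / θ' x ^ 2) x := by
    intro x hx
    have hx' : x ∈ Set.Icc a b := ⟨hx.1, hx.2.trans (hlt.le.trans hc.2)⟩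
    refine ((hh1 x hx').div (hθ2 x hx') (hne x hx)).congr_deriv ?_
    congr 1
    linear_combination hconst x hx' - h₁ x * hEL x hx'
  obtain ⟨x, hx, h0⟩ := exists_hasDerivAt_eq_zero hs.1
    (fun y hy => (hq y hy).continuousAt.continuousWithinAt)
    (by simp [hs0, hinit0]) (fun y hy => hq y ⟨hy.1.le, hy.2.le⟩)
  exact div_ne_zero hane (pow_ne_zero 2 (hne x ⟨hx.1.le, hx.2.le⟩)) h0
end

section
/- Let θ ∈ C²([a,b],ℝ) satisfy θ''(s) + V'(θ(s)) = 0 for all s ∈ [a,b], let c ∈ (a,b) be the unique point of [a,b] with θ'(c) = 0, and assume V'(θ(c)) ≠ 0. For d ∈ [a,b] with d ≠ c define μ'(s;d) = 1/θ'(s) + θ''(s)·∫_d^s (1/θ'(t)²) dt. Suppose μ'(s;a) tends to a real limit Lₐ as s → c⁻ and μ'(s;b) tends to a real limit L_b as s → c⁺. If θ'(a)·Lₐ > θ'(a)·L_b, then there exists k > 0 such that ∫_a^b (τ'(s)² − V''(θ(s))·τ(s)²) ds ≥ k·∫_a^b τ(s)² ds for every τ ∈ C¹([a,b],ℝ) with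 τ(a) = τ(b) = 0. If θ'(a)·Lₐ < θ'(a)·L_b, then there exists a Dirichlet-admissible perturbation τ with ∫_a^b (τ'(s)² − V''(θ(s))·τ(s)²) ds < 0. -/
open Set Filter Topology

lemma coer (α β : ℝ) (h : α < β) (q y y1 : ℝ → ℝ) (hq : Continuous q)
    (hy : ContinuousOn y (Icc α β)) (hy1 : ContinuousOn y1 (Icc α β))
    (pos : ∀ s ∈ Icc α β, 0 < y s)
    (d : ∀ s ∈ Ioo α β, HasDerivAt y (y1 s) s)
    (d1 : ∀ s ∈ Ioo α β, HasDerivAt y1 (-(q s * y s)) s) (c : ℝ) :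
    ∃ k > 0, ∃ δ : ℝ, ∀ τ τ' : ℝ → ℝ, (∀ s ∈ Icc α β, HasDerivAt τ (τ' s) s) →
      ContinuousOn τ' (Icc α β) →
      (y1 β / y β - δ * (β - c) / y β ^ 2) * τ β ^ 2
        - (y1 α / y α - δ * (α - c) / y α ^ 2) * τ α ^ 2 + k * (∫ s in α..β, τ s ^ 2)
        ≤ ∫ s in α..β, (τ' s ^ 2 - q s * τ s ^ 2) := by
  have hne : ∀ s ∈ Icc α β, y s ≠ 0 := fun s hs => (pos s hs).ne'
  obtain ⟨B, hB⟩ := (isCompact_Icc (a := α) (b := β)).bddAbove_image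
    (f := fun s => (s - c) ^ 2 / y s ^ 2)
    (ContinuousOn.div (by fun_prop) (hy.pow 2) (fun s hs => pow_ne_zero 2 (hne s hs)))
  obtain ⟨M, hM⟩ := (isCompact_Icc (a := α) (b := β)).bddAbove_image
    (f := fun s => y s ^ 2) (hy.pow 2)
  have hB' : ∀ s ∈ Icc α β, (s - c) ^ 2 / y s ^ 2 ≤ |B| + 1 := fun s hs => by
    have := hB (mem_image_of_mem _ hs)
    have := le_abs_self B
    linarith
  have hM' : ∀ s ∈ Icc α β, y s ^ 2 ≤ |M| + 1 := fun s hs => by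
    have := hM (mem_image_of_mem _ hs)
    have := le_abs_self M
    linarith
  set B1 := |B| + 1 with hB1
  set M1 := |M| + 1 with hM1
  have pB : 0 < B1 := by positivity
  have pM : 0 < M1 := by positivity
  set δ := 1 / (2 * B1) with hδ
  have pδ : 0 < δ := by positivity
  refine ⟨δ / (2 * M1), by positivity, δ, fun τ τ' hτ hτ' => ?_⟩
  have cτ : ContinuousOn τ (Icc α β) := fun s hs => (hτ s hs).continuousAt.continuousWithinAt
  set k := δ / (2 * M1) with hk
  have key := intervalIntegral.sub_le_integral_of_hasDeriv_right_of_le (a := α) (b := β)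
    (g := fun s => (y1 s / y s - δ * (s - c) / y s ^ 2) * τ s ^ 2)
    (g' := fun s => (((-(q s * y s)) * y s - y1 s * y1 s) / y s ^ 2
      - (δ * y s ^ 2 - δ * (s - c) * (2 * y s * y1 s)) / (y s ^ 2) ^ 2) * τ s ^ 2
      + (y1 s / y s - δ * (s - c) / y s ^ 2) * (2 * τ s * τ' s))
    (φ := fun s => τ' s ^ 2 - q s * τ s ^ 2 - k * τ s ^ 2) h.le ?_ ?_ ?_ ?_
  · rw [intervalIntegral.integral_sub, intervalIntegral.integral_const_mul] at key
    · linarith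
    · apply ContinuousOn.intervalIntegrable
      rw [uIcc_of_le h.le]
      exact (hτ'.pow 2).sub (hq.continuousOn.mul (cτ.pow 2))
    · apply ContinuousOn.intervalIntegrable
      rw [uIcc_of_le h.le]
      exact continuousOn_const.mul (cτ.pow 2)
  · exact ((hy1.div hy hne).sub (ContinuousOn.div (by fun_prop) (hy.pow 2)
      (fun s hs => pow_ne_zero 2 (hne s hs)))).mul (cτ.pow 2)
  · intro s hs
    have hs' := Ioo_subset_Icc_self hs
    have n := hne s hs'
    apply HasDerivAt.hasDerivWithinAt
    have e1 := (d1 s hs).div (d s hs) n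
    have e2 := (((hasDerivAt_id s).sub_const c).const_mul δ).div ((d s hs).pow 2)
      (pow_ne_zero 2 n)
    have e3 := (e1.sub e2).mul ((hτ s hs').pow 2)
    refine e3.congr_deriv ?_
    simp
  · apply ContinuousOn.integrableOn_Icc
    exact ((hτ'.pow 2).sub (hq.continuousOn.mul (cτ.pow 2))).sub
      (continuousOn_const.mul (cτ.pow 2))
  · intro s hs
    have hs' := Ioo_subset_Icc_self hs
    have n := hne s hs'
    have p := pos s hs'
    have b1 := hB' s hs'
    have m1 := hM' s hs'
    set P := y1 s / y s - δ * (s - c) / y s ^ 2 with hP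
    have e : ((-(q s * y s)) * y s - y1 s * y1 s) / y s ^ 2
      - (δ * y s ^ 2 - δ * (s - c) * (2 * y s * y1 s)) / (y s ^ 2) ^ 2
      = - P ^ 2 - q s - δ / y s ^ 2 * (1 - δ * ((s - c) ^ 2 / y s ^ 2)) := by
      rw [hP]; field_simp; ring
    have f1 : δ * ((s - c) ^ 2 / y s ^ 2) ≤ 1 / 2 := by
      calc δ * ((s - c) ^ 2 / y s ^ 2) ≤ δ * B1 := by gcongr
        _ = 1 / 2 := by rw [hδ]; field_simp
    have f2 : δ / M1 ≤ δ / y s ^ 2 := by gcongr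
    have f3 : k ≤ δ / y s ^ 2 * (1 - δ * ((s - c) ^ 2 / y s ^ 2)) := by
      calc k = δ / M1 * (1 / 2) := by rw [hk]; field_simp
        _ ≤ _ := by gcongr; linarith
    rw [e]
    nlinarith [sq_nonneg (τ' s - P * τ s), mul_le_mul_of_nonneg_right f3 (sq_nonneg (τ s))]

lemma setup (a b c d L : ℝ) (U : Set ℝ) (hU : IsOpen U) (hUo : U.OrdConnected) (hcU : c ∉ U)
    (hd : d ∈ U) (w w1 q : ℝ → ℝ) (hw : Continuous w) (hw1 : Continuous w1)
    (dw : ∀ s ∈ Ioo a b, HasDerivAt w (w1 s) s)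
    (dw1 : ∀ s ∈ Ioo a b, HasDerivAt w1 (-(q s * w s)) s)
    (hne : ∀ s ∈ U, w s ≠ 0) (hwc : w c = 0) (hw1c : w1 c ≠ 0)
    (hL : Tendsto (fun s => 1 / w s + w1 s * ∫ t in d..s, 1 / (w t) ^ 2) (𝓝[U] c) (𝓝 L)) :
    ∃ u u1 : ℝ → ℝ, ContinuousOn u (insert c U) ∧ ContinuousOn u1 (insert c U) ∧
      u c = -1 / w1 c ∧ u1 c = L ∧
      (∀ s ∈ U, u s = w s * ∫ t in d..s, 1 / (w t) ^ 2) ∧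
      (∀ s ∈ U ∩ Ioo a b, HasDerivAt u (u1 s) s) ∧
      (∀ s ∈ U ∩ Ioo a b, HasDerivAt u1 (-(q s * u s)) s) := by
  have hcont : ContinuousOn (fun t => 1 / (w t) ^ 2) U :=
    continuousOn_const.div (hw.continuousOn.pow 2) (fun s hs => pow_ne_zero 2 (hne s hs))
  have dI : ∀ s ∈ U, HasDerivAt (fun s => ∫ t in d..s, 1 / (w t) ^ 2) (1 / (w s) ^ 2) s := by
    intro s hs
    apply intervalIntegral.integral_hasDerivAt_right
    · exact (hcont.mono (hUo.uIcc_subset hd hs)).intervalIntegrable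
    · exact hcont.stronglyMeasurableAtFilter hU s hs
    · exact hcont.continuousAt (hU.mem_nhds hs)
  set I := fun s => ∫ t in d..s, 1 / (w t) ^ 2 with hI
  have hsc : ∀ s ∈ U, s ≠ c := fun s hs h => hcU (h ▸ hs)
  classical
  set u := Function.update (fun s => w s * I s) c (-1 / w1 c) with hu
  set u1 := Function.update (fun s => 1 / w s + w1 s * I s) c L with hu1
  have eu : ∀ s ∈ U, u s = w s * I s := fun s hs => by simp [hu, hsc s hs]
  have eu1 : ∀ s ∈ U, u1 s = 1 / w s + w1 s * I s := fun s hs => by simp [hu1, hsc s hs]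
  have cU : U \ {c} = U := by simp [hcU]
  refine ⟨u, u1, ?_, ?_, by simp [hu], by simp [hu1], eu, ?_, ?_⟩
  · rw [ContinuousOn]
    intro s hs
    rcases hs with rfl | hs
    · rw [continuousWithinAt_insert_self, hu, continuousWithinAt_update_same, cU]
      have t1 : Tendsto (fun s' => (w s' * (1 / w s' + w1 s' * I s') - 1) / w1 s') (𝓝[U] s)
          (𝓝 ((w s * L - 1) / w1 s)) :=
        Tendsto.div (((hw.continuousAt.tendsto.mono_left nhdsWithin_le_nhds).mul hL).sub_const 1)
          (hw1.continuousAt.tendsto.mono_left nhdsWithin_le_nhds) hw1c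
      rw [hwc] at t1
      have : (0 * L - 1) / w1 s = -1 / w1 s := by ring
      rw [this] at t1
      refine t1.congr' ?_
      have ev : ∀ᶠ s' in 𝓝[U] s, w1 s' ≠ 0 :=
        (hw1.continuousAt.eventually_ne hw1c).filter_mono nhdsWithin_le_nhds
      filter_upwards [ev, self_mem_nhdsWithin] with x hx hxU
      have := hne x hxU
      field_simp
      ring
    · apply ContinuousAt.continuousWithinAt
      have : ContinuousAt (fun s => w s * I s) s := hw.continuousAt.mul (dI s hs).continuousAt
      refine this.congr ?_
      filter_upwards [hU.mem_nhds hs] with x hx using (eu x hx).symm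
  · rw [ContinuousOn]
    intro s hs
    rcases hs with rfl | hs
    · rw [continuousWithinAt_insert_self, hu1, continuousWithinAt_update_same, cU]
      exact hL
    · apply ContinuousAt.continuousWithinAt
      have : ContinuousAt (fun s => 1 / w s + w1 s * I s) s :=
        (continuousAt_const.div hw.continuousAt (hne s hs)).add
          (hw1.continuousAt.mul (dI s hs).continuousAt)
      refine this.congr ?_
      filter_upwards [hU.mem_nhds hs] with x hx using (eu1 x hx).symm
  · rintro s ⟨hs, hs'⟩
    have := (dw s hs').mul (dI s hs)
    rw [eu1 s hs]
    have n := hne s hs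
    refine (this.congr_of_eventuallyEq ?_).congr_deriv ?_
    · filter_upwards [hU.mem_nhds hs] with x hx using (eu x hx)
    · field_simp; ring
  · rintro s ⟨hs, hs'⟩
    have n := hne s hs
    have := ((hasDerivAt_const s (1:ℝ)).div (dw s hs') n).add ((dw1 s hs').mul (dI s hs))
    rw [eu s hs]
    refine (this.congr_of_eventuallyEq ?_).congr_deriv ?_
    · filter_upwards [hU.mem_nhds hs] with x hx using (eu1 x hx)
    · field_simp; ring

lemma glue (a b c : ℝ) (hac : a ≤ c) (hcb : c ≤ b) (f g : ℝ → ℝ) (hf : ContinuousOn f (Icc a c))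
    (hg : ContinuousOn g (Icc c b)) (h : f c = g c) :
    ContinuousOn (fun s => if s ≤ c then f s else g s) (Icc a b) := by
  rw [← Icc_union_Icc_eq_Icc hac hcb]
  refine ContinuousOn.union_of_isClosed ?_ ?_ isClosed_Icc isClosed_Icc
  · exact hf.congr fun s hs => by simp [hs.2]
  · refine hg.congr fun s hs => ?_
    by_cases h1 : s ≤ c
    · have : s = c := le_antisymm h1 hs.1
      subst this; simp [h]
    · simp [h1]

lemma dmax (x : ℝ) : HasDerivAt (fun x : ℝ => (max 0 x) ^ 2) (2 * max 0 x) x := by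
  rcases lt_trichotomy x 0 with h | h | h
  · rw [max_eq_left h.le, mul_zero]
    refine (hasDerivAt_const x (0:ℝ)).congr_of_eventuallyEq ?_
    filter_upwards [Iio_mem_nhds h] with y hy
    simp [max_eq_left (le_of_lt (mem_Iio.1 hy))]
  · subst h
    simp only [max_self, mul_zero]
    rw [hasDerivAt_iff_isLittleO_nhds_zero]
    have : (fun h : ℝ => h ^ 2) =o[𝓝 0] fun h => h := by
      simpa using Asymptotics.isLittleO_pow_id (𝕜 := ℝ) (n := 2) (by norm_num)
    refine Asymptotics.IsBigO.trans_isLittleO (Asymptotics.IsBigO.of_bound 1 ?_) this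
    refine Eventually.of_forall fun y => ?_
    rcases le_total 0 y with hy | hy
    · simp [max_eq_right hy]
    · simp [max_eq_left hy]; positivity
  · rw [max_eq_right h.le]
    have := (hasDerivAt_pow 2 x)
    refine (this.congr_of_eventuallyEq ?_).congr_deriv (by simp)
    filter_upwards [Ioi_mem_nhds h] with y hy
    simp [max_eq_right (le_of_lt (mem_Ioi.1 hy))]

lemma aux1 {x B p : ℝ} (h0 : 0 ≤ x) (h1 : x ≤ B) (h2 : p ≤ 1) : x * p ≤ 2 + B := by
  nlinarith

lemma aux2 {t B : ℝ} (h0 : 0 ≤ t) (h1 : t ≤ 1) (hB : 0 ≤ B) :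
    |(1 - t) ^ 2 - 2 * t * (1 - t)| ≤ 2 + B := by
  rw [abs_le]
  constructor <;> nlinarith

lemma aux3 {v1 h1 q v h A B C : ℝ} (j1 : v1 * h1 ≤ A * B) (j2 : h1 ^ 2 ≤ B ^ 2)
    (j3 : -(q * (2 * v * h + h ^ 2)) ≤ C) :
    (v1 + h1) ^ 2 - q * (v + h) ^ 2 - (v1 ^ 2 - q * v ^ 2) ≤ 2 * A * B + B ^ 2 + C := by
  have : (v1 + h1) ^ 2 - q * (v + h) ^ 2 - (v1 ^ 2 - q * v ^ 2)
    = 2 * (v1 * h1) + h1 ^ 2 + -(q * (2 * v * h + h ^ 2)) := by ring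
  linarith

set_option maxHeartbeats 1000000 in
lemma smooth (a b c : ℝ) (hac : a < c) (hcb : c < b) (q u u1 v v1 : ℝ → ℝ) (hq : Continuous q)
    (hu : ContinuousOn u (Icc a c)) (hu1 : ContinuousOn u1 (Icc a c))
    (hv : ContinuousOn v (Icc c b)) (hv1 : ContinuousOn v1 (Icc c b))
    (du : ∀ s ∈ Ioo a c, HasDerivAt u (u1 s) s)
    (du1 : ∀ s ∈ Ioo a c, HasDerivAt u1 (-(q s * u s)) s)
    (dv : ∀ s ∈ Ioo c b, HasDerivAt v (v1 s) s)
    (dv1 : ∀ s ∈ Ioo c b, HasDerivAt v1 (-(q s * v s)) s)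
    (hua : u a = 0) (hvb : v b = 0) (huv : u c = v c) (hpos : 0 < u c) (hlt : u1 c < v1 c) :
    ∃ τ τ' : ℝ → ℝ,
        (∀ s ∈ Set.Icc a b, HasDerivAt τ (τ' s) s) ∧
        ContinuousOn τ' (Set.Icc a b) ∧
        (∃ s ∈ Set.Icc a b, τ s ≠ 0) ∧
        τ a = 0 ∧ τ b = 0 ∧
        (∫ s in a..b, (τ' s ^ 2 - q s * τ s ^ 2)) < 0 := by
  have hab := hac.trans hcb
  -- energies
  have E1 : ∫ s in a..c, (u1 s ^ 2 - q s * u s ^ 2) = u c * u1 c := by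
    have := intervalIntegral.integral_eq_sub_of_hasDerivAt_of_le hac.le (f := fun s => u s * u1 s)
      (f' := fun s => u1 s ^ 2 - q s * u s ^ 2) (hu.mul hu1)
      (fun s hs => ((du s hs).mul (du1 s hs)).congr_deriv (by ring))
      (by
        apply ContinuousOn.intervalIntegrable
        rw [uIcc_of_le hac.le]
        exact (hu1.pow 2).sub (hq.continuousOn.mul (hu.pow 2)))
    rw [this, hua]; ring
  have E2 : ∫ s in c..b, (v1 s ^ 2 - q s * v s ^ 2) = - (v c * v1 c) := by
    have := intervalIntegral.integral_eq_sub_of_hasDerivAt_of_le hcb.le (f := fun s => v s * v1 s)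
      (f' := fun s => v1 s ^ 2 - q s * v s ^ 2) (hv.mul hv1)
      (fun s hs => ((dv s hs).mul (dv1 s hs)).congr_deriv (by ring))
      (by
        apply ContinuousOn.intervalIntegrable
        rw [uIcc_of_le hcb.le]
        exact (hv1.pow 2).sub (hq.continuousOn.mul (hv.pow 2)))
    rw [this, hvb]; ring
  obtain ⟨K1, hK1⟩ := isCompact_Icc.exists_bound_of_continuousOn hv
  obtain ⟨K2, hK2⟩ := isCompact_Icc.exists_bound_of_continuousOn hv1
  obtain ⟨K3, hK3⟩ := (isCompact_Icc (a := c) (b := b)).exists_bound_of_continuousOn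
    hq.continuousOn
  simp only [Real.norm_eq_abs] at hK1 hK2 hK3
  have mc : c ∈ Icc c b := ⟨le_rfl, hcb.le⟩
  have K1n : 0 ≤ K1 := (abs_nonneg _).trans (hK1 c mc)
  have K2n : 0 ≤ K2 := (abs_nonneg _).trans (hK2 c mc)
  have K3n : 0 ≤ K3 := (abs_nonneg _).trans (hK3 c mc)
  set J := v1 c - u1 c with hJ
  have pJ : 0 < J := by rw [hJ]; linarith
  set H := J * (2 + (b - c)) with hH
  have pbc : 0 < b - c := by linarith
  have pH : 0 < H := by positivity
  set C := 2 * K2 * H + H ^ 2 + K3 * (2 * K1 * H + H ^ 2) with hC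
  have Cn : 0 ≤ C := by positivity
  obtain ⟨ε, pε, hε1, hε2⟩ : ∃ ε > 0, ε ≤ b - c ∧ C * ε < u c * J := by
    refine ⟨min (b - c) (u c * J / (2 * (C + 1))), lt_min pbc (by positivity),
      min_le_left _ _, ?_⟩
    calc C * min (b - c) (u c * J / (2 * (C + 1))) ≤ C * (u c * J / (2 * (C + 1))) := by
          gcongr; exact min_le_right _ _
      _ = u c * J * (C / (2 * (C + 1))) := by ring
      _ < u c * J * 1 := by
          gcongr
          rw [div_lt_one (by positivity)]; linarith
      _ = _ := by ring
  set m : ℝ → ℝ := fun s => max 0 (1 - (s - c) / ε) with hm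
  set h : ℝ → ℝ := fun s => - J * ((s - c) * m s ^ 2) with hh
  set h1 : ℝ → ℝ := fun s => - J * (m s ^ 2 - 2 * ((s - c) / ε) * m s) with hh1
  have cm : Continuous m := by fun_prop
  have ch : Continuous h := by fun_prop
  have ch1 : Continuous h1 := by fun_prop
  have dh : ∀ s, HasDerivAt h (h1 s) s := by
    intro s
    have i1 : HasDerivAt (fun s => 1 - (s - c) / ε) (-(1 / ε)) s :=
      (((hasDerivAt_id s).sub_const c).div_const ε).const_sub 1
    have i2 := (dmax (1 - (s - c) / ε)).comp s i1
    have i3 := ((((hasDerivAt_id s).sub_const c).mul i2).const_mul (-J))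
    refine i3.congr_deriv ?_
    simp only [hh1, hm, id, Function.comp]
    field_simp
    ring
  have mc1 : m c = 1 := by simp [hm]
  have hhc : h c = 0 := by simp [hh]
  have hh1c : h1 c = -J := by simp [hh1, mc1]
  have m0 : ∀ s, c + ε ≤ s → m s = 0 := by
    intro s hs
    simp only [hm]
    apply max_eq_left
    rw [sub_nonpos, le_div_iff₀ pε]; linarith
  have h0 : ∀ s, c + ε ≤ s → h s = 0 := fun s hs => by simp [hh, m0 s hs]
  have h10 : ∀ s, c + ε ≤ s → h1 s = 0 := fun s hs => by simp [hh1, m0 s hs]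
  set g : ℝ → ℝ := fun s => if s ≤ c then u1 s else v1 s + h1 s with hg
  have cg : ContinuousOn g (Icc a b) := glue a b c hac.le hcb.le u1 (fun s => v1 s + h1 s) hu1
    (hv1.add ch1.continuousOn) (by simp only [hh1c, hJ]; ring)
  set G : ℝ → ℝ := fun s => g (max a (min b s)) with hG
  have cG : Continuous G := by
    refine cg.comp_continuous (by fun_prop) fun s => ⟨le_max_left _ _, ?_⟩
    exact max_le hab.le (min_le_left _ _)
  have Gg : ∀ s ∈ Icc a b, G s = g s := fun s hs => by
    simp only [hG]; rw [min_eq_right hs.2, max_eq_right hs.1]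
  have Gu : ∀ s ∈ Icc a c, G s = u1 s := fun s hs => by
    rw [Gg s ⟨hs.1, hs.2.trans hcb.le⟩]; simp [hg, hs.2]
  have Gv : ∀ s ∈ Icc c b, G s = v1 s + h1 s := fun s hs => by
    rw [Gg s ⟨hac.le.trans hs.1, hs.2⟩]
    by_cases hsc : s ≤ c
    · have : s = c := le_antisymm hsc hs.1
      subst this; simp [hg, hh1c, hJ]
    · simp [hg, hsc]
  set τ : ℝ → ℝ := fun s => ∫ t in a..s, G t with hτ
  have dτ : ∀ s, HasDerivAt τ (G s) s := fun s =>
    (cG.integral_hasStrictDerivAt a s).hasDerivAt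
  have τu : ∀ s ∈ Icc a c, τ s = u s := by
    intro s hs
    have := intervalIntegral.integral_eq_sub_of_hasDerivAt_of_le hs.1 (f := u) (f' := G)
      (hu.mono (Icc_subset_Icc_right hs.2))
      (fun t ht => by
        rw [Gu t ⟨ht.1.le, ht.2.le.trans hs.2⟩]
        exact du t ⟨ht.1, ht.2.trans_le hs.2⟩)
      (cG.intervalIntegrable _ _)
    simp only [hτ]; rw [this, hua, sub_zero]
  have τv : ∀ s ∈ Icc c b, τ s = v s + h s := by
    intro s hs
    have := intervalIntegral.integral_eq_sub_of_hasDerivAt_of_le hs.1 (f := fun s => v s + h s)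
      (f' := G)
      ((hv.mono (Icc_subset_Icc_right hs.2)).add ch.continuousOn)
      (fun t ht => by
        rw [Gv t ⟨ht.1.le, ht.2.le.trans hs.2⟩]
        exact (dv t ⟨ht.1, ht.2.trans_le hs.2⟩).add (dh t))
      (cG.intervalIntegrable _ _)
    have h2 := τu c ⟨hac.le, le_rfl⟩
    simp only [hτ] at h2 ⊢
    rw [← intervalIntegral.integral_add_adjacent_intervals (cG.intervalIntegrable a c)
      (cG.intervalIntegrable c s), this, h2, huv, hhc]
    ring
  have cτ : Continuous τ := continuous_iff_continuousAt.2 fun s => (dτ s).continuousAt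
  refine ⟨τ, G, fun s _ => dτ s, cG.continuousOn, ⟨c, ⟨hac.le, hcb.le⟩, ?_⟩, by simp [hτ], ?_, ?_⟩
  · rw [τu c ⟨hac.le, le_rfl⟩]; exact hpos.ne'
  · rw [τv b ⟨hcb.le, le_rfl⟩, hvb, h0 b (by linarith)]; simp
  have cint : Continuous fun s => G s ^ 2 - q s * τ s ^ 2 := by fun_prop
  rw [← intervalIntegral.integral_add_adjacent_intervals (cint.intervalIntegrable a c)
      (cint.intervalIntegrable c b)]
  have F1 : ∫ s in a..c, (G s ^ 2 - q s * τ s ^ 2) = u c * u1 c := by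
    rw [← E1]
    apply intervalIntegral.integral_congr
    intro s hs
    rw [uIcc_of_le hac.le] at hs
    simp only [Gu s hs, τu s hs]
  set D : ℝ → ℝ := fun s => (G s ^ 2 - q s * τ s ^ 2) - (v1 s ^ 2 - q s * v s ^ 2) with hD
  have cD : ContinuousOn D (Icc c b) :=
    cint.continuousOn.sub ((hv1.pow 2).sub (hq.continuousOn.mul (hv.pow 2)))
  have F2 : ∫ s in c..b, (G s ^ 2 - q s * τ s ^ 2) = - (v c * v1 c) + ∫ s in c..b, D s := by
    rw [← E2, hD, intervalIntegral.integral_sub (cint.intervalIntegrable c b)]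
    · ring
    · apply ContinuousOn.intervalIntegrable
      rw [uIcc_of_le hcb.le]
      exact (hv1.pow 2).sub (hq.continuousOn.mul (hv.pow 2))
  have mid : c ≤ c + ε := by linarith
  have mid2 : c + ε ≤ b := by linarith
  have iD1 : IntervalIntegrable D MeasureTheory.volume c (c + ε) := by
    apply ContinuousOn.intervalIntegrable
    rw [uIcc_of_le mid]
    exact cD.mono (Icc_subset_Icc_right mid2)
  have iD2 : IntervalIntegrable D MeasureTheory.volume (c + ε) b := by
    apply ContinuousOn.intervalIntegrable
    rw [uIcc_of_le mid2]
    exact cD.mono (Icc_subset_Icc_left mid)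
  have D0 : ∫ s in (c + ε)..b, D s = 0 := by
    apply intervalIntegral.integral_zero_ae
    refine Eventually.of_forall fun s hs => ?_
    rw [uIoc_of_le mid2] at hs
    have hs' : s ∈ Icc c b := ⟨mid.trans hs.1.le, hs.2⟩
    simp only [hD, Gv s hs', τv s hs', h0 s hs.1.le, h10 s hs.1.le]
    ring
  have D1 : ∫ s in c..(c + ε), D s ≤ C * ε := by
    have := intervalIntegral.integral_mono_on (g := fun _ => C) mid iD1
      (continuous_const.intervalIntegrable _ _) (fun s hs => by
        have hs' : s ∈ Icc c b := ⟨hs.1, hs.2.trans mid2⟩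
        simp only [hD, Gv s hs', τv s hs']
        have t0 : 0 ≤ (s - c) / ε := div_nonneg (by linarith [hs.1]) pε.le
        have t1 : (s - c) / ε ≤ 1 := by rw [div_le_one pε]; linarith [hs.2]
        have em : m s = 1 - (s - c) / ε := max_eq_right (by linarith)
        have sc0 : 0 ≤ s - c := by linarith [hs.1]
        have sc1 : s - c ≤ b - c := by linarith [hs'.2]
        have bh : |h s| ≤ H := by
          simp only [hh, em]
          rw [abs_mul, abs_neg, abs_of_pos pJ, hH]
          gcongr
          rw [abs_of_nonneg (by positivity)]
          have : (1 - (s - c) / ε) ^ 2 ≤ 1 := by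
            apply pow_le_one₀ <;> linarith
          exact aux1 sc0 sc1 this
        have bh1 : |h1 s| ≤ H := by
          simp only [hh1, em]
          rw [abs_mul, abs_neg, abs_of_pos pJ, hH]
          gcongr
          exact aux2 t0 t1 pbc.le
        have k1 := hK1 s hs'
        have k2 := hK2 s hs'
        have k3 := hK3 s hs'
        have j1 : v1 s * h1 s ≤ K2 * H := (le_abs_self _).trans (by rw [abs_mul]; gcongr)
        have j2 : h1 s ^ 2 ≤ H ^ 2 := sq_le_sq' (by linarith [(abs_le.1 bh1).1]) (abs_le.1 bh1).2
        have j3 : -(q s * (2 * v s * h s + h s ^ 2)) ≤ K3 * (2 * K1 * H + H ^ 2) := by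
          refine (neg_le_abs _).trans ?_
          rw [abs_mul]
          gcongr
          refine (abs_add_le _ _).trans ?_
          rw [abs_mul, abs_mul, abs_pow, abs_two]
          gcongr
        rw [hC]
        exact aux3 j1 j2 j3)
    rw [intervalIntegral.integral_const] at this
    simp only [smul_eq_mul] at this
    linarith
  rw [F1, F2, ← intervalIntegral.integral_add_adjacent_intervals iD1 iD2, D0, ← huv]
  have : u c * J = u c * v1 c - u c * u1 c := by rw [hJ]; ring
  linarith

lemma core (a b c : ℝ) (hac : a < c) (hcb : c < b) (w w1 q : ℝ → ℝ)
    (hw : Continuous w) (hw1 : Continuous w1) (hq : Continuous q)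
    (dw : ∀ s ∈ Ioo a b, HasDerivAt w (w1 s) s)
    (dw1 : ∀ s ∈ Ioo a b, HasDerivAt w1 (-(q s * w s)) s)
    (hne : ∀ s, s ≠ c → w s ≠ 0) (hwc : w c = 0) (hw1c : w1 c < 0) (La Lb : ℝ)
    (hLa : Tendsto (fun s => 1 / w s + w1 s * ∫ t in a..s, 1 / (w t) ^ 2) (𝓝[<] c) (𝓝 La))
    (hLb : Tendsto (fun s => 1 / w s + w1 s * ∫ t in b..s, 1 / (w t) ^ 2) (𝓝[>] c) (𝓝 Lb)) :
    0 < w a ∧ (Lb < La →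
      ∃ k > 0, ∀ τ τ' : ℝ → ℝ,
        (∀ s ∈ Set.Icc a b, HasDerivAt τ (τ' s) s) →
        ContinuousOn τ' (Set.Icc a b) →
        τ a = 0 → τ b = 0 →
        (∫ s in a..b, (τ' s ^ 2 - q s * τ s ^ 2)) ≥
          k * ∫ s in a..b, τ s ^ 2) ∧
    (La < Lb →
      ∃ τ τ' : ℝ → ℝ,
        (∀ s ∈ Set.Icc a b, HasDerivAt τ (τ' s) s) ∧
        ContinuousOn τ' (Set.Icc a b) ∧
        (∃ s ∈ Set.Icc a b, τ s ≠ 0) ∧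
        τ a = 0 ∧ τ b = 0 ∧
        (∫ s in a..b, (τ' s ^ 2 - q s * τ s ^ 2)) < 0) := by
  have hslope := hasDerivAt_iff_tendsto_slope.1 (dw c ⟨hac, hcb⟩)
  have hneg : ∀ᶠ s in 𝓝[≠] c, slope w c s < 0 := hslope.eventually (Iio_mem_nhds hw1c)
  have wpos : ∀ s, s < c → 0 < w s := by
    have h1 : ∀ᶠ s in 𝓝[<] c, 0 < w s := by
      filter_upwards [hneg.filter_mono (nhdsWithin_mono c fun x hx => ne_of_lt hx),
        self_mem_nhdsWithin] with s hs hsc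
      have hsc' : s < c := hsc
      rw [slope_def_field, hwc, sub_zero] at hs
      by_contra hc
      exact absurd hs (not_lt.2 (div_nonneg_of_nonpos (not_lt.1 hc) (by linarith)))
    obtain ⟨s0, h0, h0c⟩ := (h1.and self_mem_nhdsWithin).exists
    intro s hs
    by_contra hc
    obtain ⟨x, hx, hx0⟩ := isPreconnected_Iio.intermediate_value (s := Iio c) (a := s) (b := s0)
      hs h0c hw.continuousOn ⟨not_lt.1 hc, h0.le⟩
    exact hne x (ne_of_lt hx) hx0
  have wneg : ∀ s, c < s → w s < 0 := by
    have h1 : ∀ᶠ s in 𝓝[>] c, w s < 0 := by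
      filter_upwards [hneg.filter_mono (nhdsWithin_mono c fun x hx => ne_of_gt hx),
        self_mem_nhdsWithin] with s hs hsc
      have hsc' : c < s := hsc
      rw [slope_def_field, hwc, sub_zero] at hs
      by_contra hc
      exact absurd hs (not_lt.2 (div_nonneg (not_lt.1 hc) (by linarith)))
    obtain ⟨s0, h0, h0c⟩ := (h1.and self_mem_nhdsWithin).exists
    intro s hs
    by_contra hc
    obtain ⟨x, hx, hx0⟩ := isPreconnected_Ioi.intermediate_value (s := Ioi c) (a := s0) (b := s)
      h0c hs hw.continuousOn ⟨h0.le, not_lt.1 hc⟩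
    exact hne x (ne_of_gt hx) hx0
  obtain ⟨u, u1, hu, hu1, uc, u1c, eu, du, du1⟩ := setup a b c a La (Iio c) isOpen_Iio
    ordConnected_Iio (by simp) hac w w1 q hw hw1 dw dw1 (fun s hs => hne s (ne_of_lt hs)) hwc
    hw1c.ne hLa
  obtain ⟨v, v1, hv, hv1, vc, v1c, ev, dv, dv1⟩ := setup a b c b Lb (Ioi c) isOpen_Ioi
    ordConnected_Ioi (by simp) hcb w w1 q hw hw1 dw dw1 (fun s hs => hne s (ne_of_gt hs)) hwc
    hw1c.ne hLb
  have sub1 : Icc a c ⊆ insert c (Iio c) := fun s hs => by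
    rcases hs.2.eq_or_lt with h | h
    · exact Or.inl h
    · exact Or.inr h
  have sub2 : Icc c b ⊆ insert c (Ioi c) := fun s hs => by
    rcases hs.1.eq_or_lt with h | h
    · exact Or.inl h.symm
    · exact Or.inr h
  replace hu := hu.mono sub1
  replace hu1 := hu1.mono sub1
  replace hv := hv.mono sub2
  replace hv1 := hv1.mono sub2
  replace du : ∀ s ∈ Ioo a c, HasDerivAt u (u1 s) s := fun s hs =>
    du s ⟨hs.2, hs.1, hs.2.trans hcb⟩
  replace du1 : ∀ s ∈ Ioo a c, HasDerivAt u1 (-(q s * u s)) s := fun s hs =>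
    du1 s ⟨hs.2, hs.1, hs.2.trans hcb⟩
  replace dv : ∀ s ∈ Ioo c b, HasDerivAt v (v1 s) s := fun s hs =>
    dv s ⟨hs.1, hac.trans hs.1, hs.2⟩
  replace dv1 : ∀ s ∈ Ioo c b, HasDerivAt v1 (-(q s * v s)) s := fun s hs =>
    dv1 s ⟨hs.1, hac.trans hs.1, hs.2⟩
  have pc : 0 < -1 / w1 c := div_pos_of_neg_of_neg (by norm_num) hw1c
  refine ⟨wpos a hac, fun hL => ?_, fun hL => ?_⟩
  · obtain ⟨ε, pε, hε⟩ : ∃ ε > 0, ε * w1 c = - (La - Lb) / 4 :=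
      ⟨(La - Lb) / 4 / (-w1 c), div_pos (by linarith) (by linarith), by
        have := hw1c.ne
        field_simp⟩
    have y1pos : ∀ s ∈ Icc a c, 0 < u s + ε * w s := by
      intro s hs
      rcases hs.2.eq_or_lt with h | h
      · rw [h, uc, hwc]; simpa using pc
      · have := wpos s h
        rw [eu s h]
        have : 0 ≤ ∫ t in a..s, 1 / (w t) ^ 2 :=
          intervalIntegral.integral_nonneg hs.1 fun t _ => by positivity
        positivity
    have y2pos : ∀ s ∈ Icc c b, 0 < v s + (-ε) * w s := by
      intro s hs
      rcases hs.1.eq_or_lt with h | h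
      · rw [← h, vc, hwc]; simpa using pc
      · have := wneg s h
        rw [ev s h, intervalIntegral.integral_symm]
        have : 0 ≤ ∫ t in s..b, 1 / (w t) ^ 2 :=
          intervalIntegral.integral_nonneg hs.2 fun t _ => by positivity
        nlinarith
    obtain ⟨k1, pk1, δ1, H1⟩ := coer a c hac q (fun s => u s + ε * w s) (fun s => u1 s + ε * w1 s)
      hq (hu.add (by fun_prop)) (hu1.add (by fun_prop)) y1pos
      (fun s hs => (du s hs).add ((dw s ⟨hs.1, hs.2.trans hcb⟩).const_mul ε))
      (fun s hs => ((du1 s hs).add ((dw1 s ⟨hs.1, hs.2.trans hcb⟩).const_mul ε)).congr_deriv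
        (by ring)) c
    obtain ⟨k2, pk2, δ2, H2⟩ := coer c b hcb q (fun s => v s + (-ε) * w s)
      (fun s => v1 s + (-ε) * w1 s)
      hq (hv.add (by fun_prop)) (hv1.add (by fun_prop)) y2pos
      (fun s hs => (dv s hs).add ((dw s ⟨hac.trans hs.1, hs.2⟩).const_mul (-ε)))
      (fun s hs => ((dv1 s hs).add ((dw1 s ⟨hac.trans hs.1, hs.2⟩).const_mul (-ε))).congr_deriv
        (by ring)) c
    refine ⟨min k1 k2, lt_min pk1 pk2, fun τ τ' hτ hτ' ha hb => ?_⟩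
    have i1 : Icc a c ⊆ Icc a b := Icc_subset_Icc_right hcb.le
    have i2 : Icc c b ⊆ Icc a b := Icc_subset_Icc_left hac.le
    have A1 := H1 τ τ' (fun s hs => hτ s (i1 hs)) (hτ'.mono i1)
    have A2 := H2 τ τ' (fun s hs => hτ s (i2 hs)) (hτ'.mono i2)
    have cτ : ContinuousOn τ (Icc a b) := fun s hs => (hτ s hs).continuousAt.continuousWithinAt
    have cQ : ContinuousOn (fun s => τ' s ^ 2 - q s * τ s ^ 2) (Icc a b) :=
      (hτ'.pow 2).sub (hq.continuousOn.mul (cτ.pow 2))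
    have c2 : ContinuousOn (fun s => τ s ^ 2) (Icc a b) := cτ.pow 2
    have ii : ∀ f : ℝ → ℝ, ContinuousOn f (Icc a b) →
        ∫ s in a..b, f s = (∫ s in a..c, f s) + ∫ s in c..b, f s := fun f hf =>
      (intervalIntegral.integral_add_adjacent_intervals
        (ContinuousOn.intervalIntegrable (by rw [uIcc_of_le hac.le]; exact hf.mono i1))
        (ContinuousOn.intervalIntegrable (by rw [uIcc_of_le hcb.le]; exact hf.mono i2))).symm
    rw [ii _ cQ, ii _ c2]
    have n1 : 0 ≤ ∫ s in a..c, τ s ^ 2 :=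
      intervalIntegral.integral_nonneg hac.le fun t _ => by positivity
    have n2 : 0 ≤ ∫ s in c..b, τ s ^ 2 :=
      intervalIntegral.integral_nonneg hcb.le fun t _ => by positivity
    have m1 := mul_le_mul_of_nonneg_right (min_le_left k1 k2) n1
    have m2 := mul_le_mul_of_nonneg_right (min_le_right k1 k2) n2
    rw [ha] at A1
    rw [hb] at A2
    simp only [uc, vc, u1c, v1c, hwc, sub_self, mul_zero, zero_div, sub_zero, add_zero, zero_pow,
      ne_eq, OfNat.ofNat_ne_zero, not_false_eq_true, zero_sub, neg_mul] at A1 A2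
    rw [hε] at A1 A2
    have jump : 0 ≤ ((La + -(La - Lb) / 4) / (-1 / w1 c) - (Lb + -(-(La - Lb) / 4)) / (-1 / w1 c))
        * τ c ^ 2 := by
      apply mul_nonneg _ (sq_nonneg _)
      rw [← sub_div]
      apply div_nonneg _ pc.le
      linarith
    rw [sub_mul] at jump
    rw [ge_iff_le, mul_add]
    linarith
  · refine smooth a b c hac hcb q u u1 v v1 hq hu hu1 hv hv1 du du1 dv dv1 ?_ ?_ (by rw [uc, vc])
      (by rw [uc]; exact pc) (by rw [u1c, v1c]; exact hL)
    · rw [eu a hac]; simp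
    · rw [ev b hcb]; simp

theorem stmt_9 (a b : ℝ) (hab : a < b) (V : ℝ → ℝ) (hV : ContDiff ℝ 2 V)
    (θ θ' θ'' : ℝ → ℝ)
    (hθ1 : ∀ s ∈ Set.Icc a b, HasDerivAt θ (θ' s) s)
    (hθ2 : ∀ s ∈ Set.Icc a b, HasDerivAt θ' (θ'' s) s)
    (hθc : ContinuousOn θ'' (Set.Icc a b))
    (hEL : ∀ s ∈ Set.Icc a b, θ'' s + deriv V (θ s) = 0)
    (c : ℝ) (hc : c ∈ Set.Ioo a b) (hzc : θ' c = 0)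
    (huniq : ∀ s ∈ Set.Icc a b, θ' s = 0 → s = c)
    (hVc : deriv V (θ c) ≠ 0)
    (La Lb : ℝ)
    (hLa : Filter.Tendsto (fun s => 1 / θ' s + θ'' s * ∫ t in a..s, 1 / (θ' t) ^ 2)
      (nhdsWithin c (Set.Iio c)) (nhds La))
    (hLb : Filter.Tendsto (fun s => 1 / θ' s + θ'' s * ∫ t in b..s, 1 / (θ' t) ^ 2)
      (nhdsWithin c (Set.Ioi c)) (nhds Lb)) :
    (θ' a * La > θ' a * Lb →
      ∃ k > 0, ∀ τ τ' : ℝ → ℝ,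
        (∀ s ∈ Set.Icc a b, HasDerivAt τ (τ' s) s) →
        ContinuousOn τ' (Set.Icc a b) →
        τ a = 0 → τ b = 0 →
        (∫ s in a..b, (τ' s ^ 2 - deriv (deriv V) (θ s) * τ s ^ 2)) ≥
          k * ∫ s in a..b, τ s ^ 2) ∧
    (θ' a * La < θ' a * Lb →
      ∃ τ τ' : ℝ → ℝ,
        (∀ s ∈ Set.Icc a b, HasDerivAt τ (τ' s) s) ∧
        ContinuousOn τ' (Set.Icc a b) ∧
        (∃ s ∈ Set.Icc a b, τ s ≠ 0) ∧
        τ a = 0 ∧ τ b = 0 ∧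
        (∫ s in a..b, (τ' s ^ 2 - deriv (deriv V) (θ s) * τ s ^ 2)) < 0) := by
  obtain ⟨hac, hcb⟩ := hc
  have hcI : c ∈ Icc a b := ⟨hac.le, hcb.le⟩
  have hV1 : ContDiff ℝ 1 (deriv V) := by
    have : ContDiff ℝ (1 + 1) V := by simpa [one_add_one_eq_two] using hV
    exact (contDiff_succ_iff_deriv.1 this).2.2
  have hV2 : Continuous (deriv (deriv V)) := hV1.continuous_deriv le_rfl
  set e : ℝ → ℝ := fun s => max a (min b s) with he
  have ce : Continuous e := by fun_prop
  have eI : ∀ s, e s ∈ Icc a b := fun s => ⟨le_max_left _ _, max_le hab.le (min_le_left _ _)⟩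
  have ee : ∀ s ∈ Icc a b, e s = s := fun s hs => by
    simp only [he]; rw [min_eq_right hs.2, max_eq_right hs.1]
  have ec : ∀ s, e s = c → s = c := by
    intro s h
    simp only [he] at h
    rcases le_total b s with h1 | h1
    · rw [min_eq_left h1, max_eq_right hab.le] at h; linarith
    · rw [min_eq_right h1] at h
      rcases le_total a s with h2 | h2
      · rwa [max_eq_right h2] at h
      · rw [max_eq_left h2] at h; linarith
  have cθ : ContinuousOn θ (Icc a b) := fun s hs => (hθ1 s hs).continuousAt.continuousWithinAt
  have cθ' : ContinuousOn θ' (Icc a b) := fun s hs => (hθ2 s hs).continuousAt.continuousWithinAt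
  set q : ℝ → ℝ := fun s => deriv (deriv V) (θ (e s)) with hqdef
  have hq : Continuous q := hV2.comp (cθ.comp_continuous ce eI)
  have gen : ∀ σ : ℝ, σ ^ 2 = 1 → σ * θ'' c < 0 → _ := fun σ hσ hneg =>
    core a b c hac hcb (fun s => σ * θ' (e s)) (fun s => σ * θ'' (e s)) q
    (continuous_const.mul (cθ'.comp_continuous ce eI))
    (continuous_const.mul (hθc.comp_continuous ce eI)) hq
    (by
      intro s hs
      have hs' := Ioo_subset_Icc_self hs
      simp only [ee s hs']
      refine ((hθ2 s hs').congr_of_eventuallyEq ?_).const_mul σ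
      filter_upwards [Ioo_mem_nhds hs.1 hs.2] with x hx
      rw [ee x (Ioo_subset_Icc_self hx)])
    (by
      intro s hs
      have hs' := Ioo_subset_Icc_self hs
      have h2 : HasDerivAt (fun s => - deriv V (θ s)) (-(deriv (deriv V) (θ s) * θ' s)) s :=
        (((hV1.differentiable (by norm_num)) (θ s)).hasDerivAt.comp s (hθ1 s hs')).neg
      refine ((h2.congr_of_eventuallyEq (f₁ := fun s => θ'' (e s)) ?_).const_mul σ).congr_deriv ?_
      · filter_upwards [Ioo_mem_nhds hs.1 hs.2] with x hx
        have := hEL x (Ioo_subset_Icc_self hx)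
        rw [ee x (Ioo_subset_Icc_self hx)]; linarith
      · simp only [hqdef, ee s hs']; ring)
    (by
      intro s hs
      have : σ ≠ 0 := by rintro rfl; norm_num at hσ
      exact mul_ne_zero this fun h => hs (ec s (huniq _ (eI s) h)))
    (by simp only [ee c hcI, hzc, mul_zero])
    (by simpa only [ee c hcI] using hneg)
    (σ * La) (σ * Lb)
    (by
      refine (hLa.const_mul σ).congr' ?_
      filter_upwards [self_mem_nhdsWithin, mem_nhdsWithin_of_mem_nhds (Ioi_mem_nhds hac)]
        with s hs1 hs2
      have hs1' : s < c := hs1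
      have hs2' : a < s := hs2
      have hi : ∫ t in a..s, 1 / (σ * θ' (e t)) ^ 2 = ∫ t in a..s, 1 / (θ' t) ^ 2 := by
        apply intervalIntegral.integral_congr
        intro t ht
        rw [uIcc_of_le hs2'.le] at ht
        simp only
        rw [ee t ⟨ht.1, by linarith [ht.2]⟩, mul_pow, hσ, one_mul]
      rw [hi, ee s ⟨hs2'.le, by linarith⟩]
      have hs : σ⁻¹ = σ := inv_eq_of_mul_eq_one_left (by rw [← sq]; exact hσ)
      rw [one_div (σ * _), mul_inv, hs]; ring)
    (by
      refine (hLb.const_mul σ).congr' ?_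
      filter_upwards [self_mem_nhdsWithin, mem_nhdsWithin_of_mem_nhds (Iio_mem_nhds hcb)]
        with s hs1 hs2
      have hs1' : c < s := hs1
      have hs2' : s < b := hs2
      have hi : ∫ t in b..s, 1 / (σ * θ' (e t)) ^ 2 = ∫ t in b..s, 1 / (θ' t) ^ 2 := by
        apply intervalIntegral.integral_congr
        intro t ht
        rw [uIcc_of_ge hs2'.le] at ht
        simp only
        rw [ee t ⟨by linarith [ht.1], ht.2⟩, mul_pow, hσ, one_mul]
      rw [hi, ee s ⟨by linarith, hs2'.le⟩]
      have hs : σ⁻¹ = σ := inv_eq_of_mul_eq_one_left (by rw [← sq]; exact hσ)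
      rw [one_div (σ * _), mul_inv, hs]; ring)
  have hθ''c : θ'' c ≠ 0 := fun h => hVc (by have := hEL c hcI; linarith)
  obtain ⟨σ, hσ, hneg⟩ : ∃ σ : ℝ, σ ^ 2 = 1 ∧ σ * θ'' c < 0 := by
    rcases lt_or_gt_of_ne hθ''c with h | h
    · exact ⟨1, by norm_num, by linarith⟩
    · exact ⟨-1, by norm_num, by linarith⟩
  have intq : ∀ τ τ' : ℝ → ℝ, (∫ s in a..b, (τ' s ^ 2 - deriv (deriv V) (θ s) * τ s ^ 2))
      = ∫ s in a..b, (τ' s ^ 2 - q s * τ s ^ 2) := by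
    intro τ τ'
    apply intervalIntegral.integral_congr
    intro s hs
    rw [uIcc_of_le hab.le] at hs
    simp only [hqdef, ee s hs]
  obtain ⟨wa, G1, G2⟩ := gen σ hσ hneg
  rw [ee a ⟨le_rfl, hab.le⟩] at wa
  simp only [intq]
  have id1 : ∀ L, (σ * θ' a) * (σ * L) = θ' a * L := fun L => by
    linear_combination (θ' a * L) * hσ
  refine ⟨fun h => G1 ?_, fun h => G2 ?_⟩
  · rw [gt_iff_lt, ← id1, ← id1] at h
    exact lt_of_mul_lt_mul_left h wa.le
  · rw [← id1, ← id1] at h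
    exact lt_of_mul_lt_mul_left h wa.le
end

section
/- Let θ ∈ C²([a,b],ℝ) satisfy θ''(s) + V'(θ(s)) = 0 for all s ∈ [a,b], and assume there is no s ∈ [a,b] with θ'(s) = 0 and V'(θ(s)) = 0 simultaneously. Let c ∈ (a,b) be such that V'(θ(c)) = 0. Then for every σ ∈ (c,b]: there exists a not-identically-zero τ ∈ C²([c,σ],ℝ) with −τ''(s) − V''(θ(s))·τ(s) = 0 on [c,σ] and τ'(c) = τ'(σ) = 0 if and only if V'(θ(σ)) = 0. In other words, the Neumann conjugate points to c in (c,b] are exactly the points σ at which θ(σ) is a critical point of V. -/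
theorem stmt_11 (a b : ℝ) (hab : a < b) (V : ℝ → ℝ) (hV : ContDiff ℝ 2 V)
    (θ θ' θ'' : ℝ → ℝ)
    (hθ1 : ∀ s ∈ Set.Icc a b, HasDerivAt θ (θ' s) s)
    (hθ2 : ∀ s ∈ Set.Icc a b, HasDerivAt θ' (θ'' s) s)
    (hθc : ContinuousOn θ'' (Set.Icc a b))
    (hEL : ∀ s ∈ Set.Icc a b, θ'' s + deriv V (θ s) = 0)
    (hnosim : ∀ s ∈ Set.Icc a b, ¬(θ' s = 0 ∧ deriv V (θ s) = 0))
    (c : ℝ) (hc : c ∈ Set.Ioo a b) (hVc : deriv V (θ c) = 0) :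
    ∀ σ ∈ Set.Ioc c b,
      ((∃ τ τ' τ'' : ℝ → ℝ,
          (∀ s ∈ Set.Icc c σ, HasDerivAt τ (τ' s) s) ∧
          (∀ s ∈ Set.Icc c σ, HasDerivAt τ' (τ'' s) s) ∧
          ContinuousOn τ'' (Set.Icc c σ) ∧
          (∀ s ∈ Set.Icc c σ, -τ'' s - deriv (deriv V) (θ s) * τ s = 0) ∧
          τ' c = 0 ∧ τ' σ = 0 ∧
          (∃ s ∈ Set.Icc c σ, τ s ≠ 0)) ↔ deriv V (θ σ) = 0) := by
  have hV1 : ContDiff ℝ 1 (deriv V) :=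
    ((contDiff_succ_iff_deriv (n := 1)).1 (by rw [one_add_one_eq_two]; exact hV)).2.2
  have hV2 : Continuous (deriv (deriv V)) := hV1.continuous_deriv le_rfl
  have hdV : ∀ x, HasDerivAt (deriv V) (deriv (deriv V) x) x := fun x =>
    (hV1.differentiable (by norm_num) x).hasDerivAt
  intro σ hσ
  have hsub : ∀ s ∈ Set.Icc c σ, s ∈ Set.Icc a b := fun s hs =>
    ⟨hc.1.le.trans hs.1, hs.2.trans hσ.2⟩
  have hcσ : c ≤ σ := hσ.1.le
  have hcm : c ∈ Set.Icc c σ := ⟨le_rfl, hcσ⟩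
  have hσm : σ ∈ Set.Icc c σ := ⟨hcσ, le_rfl⟩
  have hcomp : ∀ s ∈ Set.Icc c σ,
      HasDerivAt (fun x => deriv V (θ x)) (deriv (deriv V) (θ s) * θ' s) s := fun s hs =>
    (hdV (θ s)).comp s (hθ1 s (hsub s hs))
  have hθcont : ContinuousOn θ (Set.Icc c σ) := fun s hs =>
    (hθ1 s (hsub s hs)).continuousAt.continuousWithinAt
  have hθ'cont : ContinuousOn θ' (Set.Icc c σ) := fun s hs =>
    (hθ2 s (hsub s hs)).continuousAt.continuousWithinAt
  have hq : ContinuousOn (fun s => deriv (deriv V) (θ s)) (Set.Icc c σ) :=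
    hV2.comp_continuousOn hθcont
  constructor
  · rintro ⟨τ, τ', τ'', h1, h2, -, hode, hτc, hτσ, s₀, hs₀, hne⟩
    by_contra hcrit
    have hW : ∀ s ∈ Set.Icc c σ,
        HasDerivAt (fun x => τ' x * θ' x + τ x * deriv V (θ x)) 0 s := by
      intro s hs
      have := ((h2 s hs).mul (hθ2 s (hsub s hs))).add ((h1 s hs).mul (hcomp s hs))
      refine this.congr_deriv ?_
      have e1 := hode s hs
      have e2 := hEL s (hsub s hs)
      linear_combination (-θ' s) * e1 + τ' s * e2
    have hWc := constant_of_has_deriv_right_zero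
      (fun s hs => (hW s hs).continuousAt.continuousWithinAt)
      (fun s hs => (hW s ⟨hs.1, hs.2.le⟩).hasDerivWithinAt) σ hσm
    simp only [hτc, hτσ, hVc, zero_mul, mul_zero, add_zero, zero_add] at hWc
    have hτ0 : τ σ = 0 := (mul_eq_zero.1 hWc).resolve_right hcrit
    obtain ⟨K, hK⟩ := isCompact_Icc.exists_bound_of_continuousOn hq
    have hE : ∀ s ∈ Set.Icc c σ,
        HasDerivAt (fun x => (τ x ^ 2 + τ' x ^ 2) * Real.exp ((1 + K) * x))
          ((2 * τ s * τ' s + 2 * τ' s * τ'' s + (1 + K) * (τ s ^ 2 + τ' s ^ 2))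
            * Real.exp ((1 + K) * s)) s := by
      intro s hs
      have hexp : HasDerivAt (fun x => Real.exp ((1 + K) * x))
          (Real.exp ((1 + K) * s) * ((1 + K) * 1)) s :=
        ((hasDerivAt_id s).const_mul (1 + K)).exp
      have := (((h1 s hs).pow 2).add ((h2 s hs).pow 2)).mul hexp
      refine this.congr_deriv ?_
      simp
      ring
    have hmono : MonotoneOn (fun x => (τ x ^ 2 + τ' x ^ 2) * Real.exp ((1 + K) * x))
        (Set.Icc c σ) := by
      apply monotoneOn_of_deriv_nonneg (convex_Icc c σ)
      · exact fun s hs => (hE s hs).continuousAt.continuousWithinAt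
      · exact fun s hs => (hE s (interior_subset hs)).differentiableAt.differentiableWithinAt
      · intro s hs
        have hs := interior_subset hs
        rw [(hE s hs).deriv]
        apply mul_nonneg _ (Real.exp_pos _).le
        have hk := abs_le.1 (hK s hs)
        have e1 : τ'' s = -(deriv (deriv V) (θ s) * τ s) := by linarith [hode s hs]
        rw [e1]
        generalize deriv (deriv V) (θ s) = q at hk
        nlinarith [sq_nonneg (τ s + τ' s), mul_nonneg (sub_nonneg.2 hk.1) (sq_nonneg (τ s - τ' s)),
          mul_nonneg (sub_nonneg.2 hk.2) (sq_nonneg (τ s + τ' s))]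
    have hle := hmono hs₀ hσm hs₀.2
    simp only [hτ0, hτσ] at hle
    have hp : 0 < (τ s₀ ^ 2 + τ' s₀ ^ 2) * Real.exp ((1 + K) * s₀) := by positivity
    norm_num at hle
    linarith
  · intro hcrit
    refine ⟨θ', fun s => -deriv V (θ s), fun s => -(deriv (deriv V) (θ s) * θ' s), ?_, ?_, ?_, ?_,
      by simp [hVc], by simp [hcrit], c, hcm, fun h => hnosim c (hsub c hcm) ⟨h, hVc⟩⟩
    · intro s hs
      refine (hθ2 s (hsub s hs)).congr_deriv ?_
      linarith [hEL s (hsub s hs)]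
    · exact fun s hs => (hcomp s hs).neg
    · exact (hq.mul hθ'cont).neg
    · intro s hs
      ring
end

section
/- Let f : [a,b] → ℝ be continuous and let c ∈ (a,b). For real numbers x < y in [a,b] and τ ∈ C¹([x,y],ℝ) write K_{[x,y]}[τ] = ∫_x^y (τ'(s)² + f(s)·τ(s)²) ds. Suppose there exist τ₁ ∈ C¹([a,c],ℝ), not identically zero, with τ₁'(a) = τ₁'(c) = 0 and K_{[a,c]}[τ₁] < 0, and τ₂ ∈ C¹([c,b],ℝ), not identically zero, with τ₂'(c) = τ₂'(b) = 0 and K_{[c,b]}[τ₂] < 0. Then there exists τ ∈ C¹([a,b],ℝ), not identically zero, with τ'(a) = τ'(b) = 0 and K_{[a,b]}[τ] < 0. -/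
theorem stmt_12 (a b : ℝ) (hab : a < b) (f : ℝ → ℝ)
    (hf : ContinuousOn f (Set.Icc a b))
    (c : ℝ) (hc : c ∈ Set.Ioo a b)
    (τ₁ τ₁' : ℝ → ℝ)
    (hτ₁ : ∀ s ∈ Set.Icc a c, HasDerivAt τ₁ (τ₁' s) s)
    (hτ₁c : ContinuousOn τ₁' (Set.Icc a c))
    (hτ₁nz : ∃ s ∈ Set.Icc a c, τ₁ s ≠ 0)
    (hτ₁a : τ₁' a = 0) (hτ₁b : τ₁' c = 0)
    (hK₁ : (∫ s in a..c, (τ₁' s ^ 2 + f s * τ₁ s ^ 2)) < 0)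
    (τ₂ τ₂' : ℝ → ℝ)
    (hτ₂ : ∀ s ∈ Set.Icc c b, HasDerivAt τ₂ (τ₂' s) s)
    (hτ₂c : ContinuousOn τ₂' (Set.Icc c b))
    (hτ₂nz : ∃ s ∈ Set.Icc c b, τ₂ s ≠ 0)
    (hτ₂a : τ₂' c = 0) (hτ₂b : τ₂' b = 0)
    (hK₂ : (∫ s in c..b, (τ₂' s ^ 2 + f s * τ₂ s ^ 2)) < 0) :
    ∃ τ τ' : ℝ → ℝ,
      (∀ s ∈ Set.Icc a b, HasDerivAt τ (τ' s) s) ∧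
      ContinuousOn τ' (Set.Icc a b) ∧
      (∃ s ∈ Set.Icc a b, τ s ≠ 0) ∧
      τ' a = 0 ∧ τ' b = 0 ∧
      (∫ s in a..b, (τ' s ^ 2 + f s * τ s ^ 2)) < 0 := by
  obtain ⟨hac, hcb⟩ := hc
  obtain ⟨α, β, hne, hm⟩ : ∃ α β : ℝ, (α ≠ 0 ∨ β ≠ 0) ∧ α * τ₁ c = β * τ₂ c := by
    by_cases h : τ₁ c = 0
    · exact ⟨1, 0, Or.inl one_ne_zero, by simp [h]⟩
    · exact ⟨τ₂ c, τ₁ c, Or.inr h, mul_comm _ _⟩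
  set τ : ℝ → ℝ := fun s => if s ≤ c then α * τ₁ s else β * τ₂ s with hτ
  set τ' : ℝ → ℝ := fun s => if s ≤ c then α * τ₁' s else β * τ₂' s with hτ'
  have hl : ∀ s, s ≤ c → τ s = α * τ₁ s := fun s hs => if_pos hs
  have hl' : ∀ s, s ≤ c → τ' s = α * τ₁' s := fun s hs => if_pos hs
  have hr : ∀ s, c ≤ s → τ s = β * τ₂ s := by
    intro s hs
    rcases hs.eq_or_lt with rfl | hs
    · rw [hl _ le_rfl, hm]
    · exact if_neg (not_le.2 hs)
  have hr' : ∀ s, c ≤ s → τ' s = β * τ₂' s := by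
    intro s hs
    rcases hs.eq_or_lt with rfl | hs
    · rw [hl' _ le_rfl, hτ₁b, hτ₂a]; simp
    · exact if_neg (not_le.2 hs)
  have hder : ∀ s ∈ Set.Icc a b, HasDerivAt τ (τ' s) s := by
    intro s hs
    rcases lt_trichotomy s c with h | h | h
    · rw [hl' s h.le]
      refine ((hτ₁ s ⟨hs.1, h.le⟩).const_mul α).congr_of_eventuallyEq ?_
      filter_upwards [Iio_mem_nhds h] with x hx using hl x (le_of_lt hx)
    · subst h
      have h1 : HasDerivWithinAt τ (τ' s) (Set.Iic s) s := by
        rw [hl' s le_rfl]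
        exact ((hτ₁ s ⟨hac.le, le_rfl⟩).const_mul α).hasDerivWithinAt.congr
          (fun x hx => hl x hx) (hl s le_rfl)
      have h2 : HasDerivWithinAt τ (τ' s) (Set.Ici s) s := by
        rw [hr' s le_rfl]
        exact ((hτ₂ s ⟨le_rfl, hcb.le⟩).const_mul β).hasDerivWithinAt.congr
          (fun x hx => hr x hx) (hr s le_rfl)
      have h3 := h1.union h2
      rw [Set.Iic_union_Ici] at h3
      exact hasDerivWithinAt_univ.1 h3
    · rw [hr' s h.le]
      refine ((hτ₂ s ⟨h.le, hs.2⟩).const_mul β).congr_of_eventuallyEq ?_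
      filter_upwards [Ioi_mem_nhds h] with x hx using hr x (le_of_lt hx)
  have hcont : ContinuousOn τ' (Set.Icc a b) := by
    rw [← Set.Icc_union_Icc_eq_Icc hac.le hcb.le]
    refine ContinuousOn.union_of_isClosed ?_ ?_ isClosed_Icc isClosed_Icc
    · exact (hτ₁c.const_mul α).congr fun x hx => hl' x hx.2
    · exact (hτ₂c.const_mul β).congr fun x hx => hr' x hx.1
  have hτcont : ContinuousOn τ (Set.Icc a b) :=
    fun s hs => (hder s hs).continuousAt.continuousWithinAt
  have hg : ContinuousOn (fun s => τ' s ^ 2 + f s * τ s ^ 2) (Set.Icc a b) :=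
    (hcont.pow 2).add (hf.mul (hτcont.pow 2))
  refine ⟨τ, τ', hder, hcont, ?_, ?_, ?_, ?_⟩
  · rcases hne with h | h
    · obtain ⟨s, hs, h0⟩ := hτ₁nz
      exact ⟨s, ⟨hs.1, hs.2.trans hcb.le⟩, by rw [hl s hs.2]; exact mul_ne_zero h h0⟩
    · obtain ⟨s, hs, h0⟩ := hτ₂nz
      exact ⟨s, ⟨hac.le.trans hs.1, hs.2⟩, by rw [hr s hs.1]; exact mul_ne_zero h h0⟩
  · rw [hl' a hac.le, hτ₁a, mul_zero]
  · rw [hr' b hcb.le, hτ₂b, mul_zero]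
  · have i1 : (∫ s in a..c, (τ' s ^ 2 + f s * τ s ^ 2))
        = α ^ 2 * ∫ s in a..c, (τ₁' s ^ 2 + f s * τ₁ s ^ 2) := by
      rw [← intervalIntegral.integral_const_mul]
      refine intervalIntegral.integral_congr fun s hs => ?_
      rw [Set.uIcc_of_le hac.le] at hs
      simp only [hl s hs.2, hl' s hs.2]
      ring
    have i2 : (∫ s in c..b, (τ' s ^ 2 + f s * τ s ^ 2))
        = β ^ 2 * ∫ s in c..b, (τ₂' s ^ 2 + f s * τ₂ s ^ 2) := by
      rw [← intervalIntegral.integral_const_mul]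
      refine intervalIntegral.integral_congr fun s hs => ?_
      rw [Set.uIcc_of_le hcb.le] at hs
      simp only [hr s hs.1, hr' s hs.1]
      ring
    rw [← intervalIntegral.integral_add_adjacent_intervals (b := c)
      ((hg.mono (Set.Icc_subset_Icc_right hcb.le)).intervalIntegrable_of_Icc hac.le)
      ((hg.mono (Set.Icc_subset_Icc_left hac.le)).intervalIntegrable_of_Icc hcb.le), i1, i2]
    rcases hne with h | h
    · have := mul_neg_of_pos_of_neg (pow_pos (abs_pos.2 h) 2) hK₁
      rw [sq_abs] at this
      have := mul_nonpos_of_nonneg_of_nonpos (sq_nonneg β) hK₂.le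
      linarith
    · have := mul_neg_of_pos_of_neg (pow_pos (abs_pos.2 h) 2) hK₂
      rw [sq_abs] at this
      have := mul_nonpos_of_nonneg_of_nonpos (sq_nonneg α) hK₁.le
      linarith
end

section
/- Let f : [a,b] → ℝ be continuous and let c ∈ (a,b). For real numbers x < y in [a,b] and τ ∈ C¹([x,y],ℝ) write K_{[x,y]}[τ] = ∫_x^y (τ'(s)² + f(s)·τ(s)²) ds. Suppose there exists M > 0 such that K_{[a,c]}[τ₁] ≥ M·∫_a^c τ₁(s)² ds for every τ₁ ∈ C¹([a,c],ℝ) with τ₁'(a) = τ₁'(c) = 0, and K_{[c,b]}[τ₂] ≥ M·∫_c^b τ₂(s)² ds for every τ₂ ∈ C¹([c,b],ℝ) with τ₂'(c) = τ₂'(b) = 0. Then there exists M̄ > 0 such that K_{[a,b]}[τ] ≥ M̄·∫_a^b τ(s)² ds for every τ ∈ C¹([a,b],ℝ) with τ'(a) = τ'(b) = 0. -/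
open Set Filter Topology MeasureTheory in
theorem approx_lemma (p c : ℝ) (hpc : p ≠ c) (e k : ℝ) (g τ τ' : ℝ → ℝ)
    (hg : ContinuousOn g (uIcc p c)) (hτ : ContinuousOn τ (uIcc p c))
    (hτ' : ContinuousOn τ' (uIcc p c)) :
    Tendsto (fun n : ℕ => ∫ s in p..c, (e * (τ' s - k * ((s - p) / (c - p)) ^ (n + 1)) ^ 2
      + g s * (τ s - k * (c - p) * ((s - p) / (c - p)) ^ (n + 2) / ((n : ℝ) + 2)) ^ 2)) atTop
      (𝓝 (∫ s in p..c, (e * τ' s ^ 2 + g s * τ s ^ 2))) := by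
  have hcp : c - p ≠ 0 := sub_ne_zero.mpr hpc.symm
  have hn2 : ∀ n : ℕ, (n : ℝ) + 2 ≠ 0 := fun n => by positivity
  have hu : ∀ s ∈ uIcc p c, 0 ≤ (s - p) / (c - p) ∧ (s - p) / (c - p) ≤ 1 := by
    intro s hs
    rcases lt_or_gt_of_ne hpc with h | h
    · rw [uIcc_of_le h.le] at hs
      have : 0 < c - p := by linarith
      exact ⟨div_nonneg (by linarith [hs.1]) this.le, (div_le_one this).2 (by linarith [hs.2])⟩
    · rw [uIcc_of_ge h.le] at hs
      have : c - p < 0 := by linarith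
      exact ⟨div_nonneg_of_nonpos (by linarith [hs.2]) this.le,
        (div_le_one_of_neg this).2 (by linarith [hs.1])⟩
  apply intervalIntegral.tendsto_integral_filter_of_dominated_convergence
    (fun s => |e| * (|τ' s| + |k|) ^ 2 + |g s| * (|τ s| + |k * (c - p)|) ^ 2)
  · refine Eventually.of_forall fun n => ?_
    have : ContinuousOn (fun s => (e * (τ' s - k * ((s - p) / (c - p)) ^ (n + 1)) ^ 2
      + g s * (τ s - k * (c - p) * ((s - p) / (c - p)) ^ (n + 2) / ((n : ℝ) + 2)) ^ 2))
      (uIcc p c) := by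
      simp only [div_eq_mul_inv]
      fun_prop
    exact (this.mono uIoc_subset_uIcc).aestronglyMeasurable measurableSet_uIoc
  · refine Eventually.of_forall fun n => Eventually.of_forall fun s hs => ?_
    obtain ⟨h0, h1⟩ := hu s (uIoc_subset_uIcc hs)
    set u := (s - p) / (c - p)
    have e1 : |τ' s - k * u ^ (n + 1)| ≤ |τ' s| + |k| := by
      refine (abs_sub _ _).trans ?_
      rw [abs_mul, abs_of_nonneg (pow_nonneg h0 _)]
      have := mul_le_mul_of_nonneg_left (pow_le_one₀ (n := n + 1) h0 h1) (abs_nonneg k)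
      linarith
    have e2 : |τ s - k * (c - p) * u ^ (n + 2) / ((n : ℝ) + 2)| ≤ |τ s| + |k * (c - p)| := by
      refine (abs_sub _ _).trans ?_
      have h3 : u ^ (n + 2) / ((n : ℝ) + 2) ≤ 1 := by
        rw [div_le_one (by positivity)]
        have := pow_le_one₀ (n := n + 2) h0 h1
        have : (0 : ℝ) ≤ n := n.cast_nonneg
        linarith
      have h4 : 0 ≤ u ^ (n + 2) / ((n : ℝ) + 2) := by positivity
      rw [mul_div_assoc, abs_mul, abs_of_nonneg h4]
      have := mul_le_mul_of_nonneg_left h3 (abs_nonneg (k * (c - p)))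
      linarith
    rw [Real.norm_eq_abs]
    refine (abs_add_le _ _).trans ?_
    rw [abs_mul, abs_mul, abs_pow, abs_pow]
    gcongr
  · apply ContinuousOn.intervalIntegrable
    fun_prop
  · have hne : ∀ᵐ s : ℝ, s ≠ c := by simp [ae_iff]
    filter_upwards [hne] with s hs hs'
    obtain ⟨h0, h1⟩ := hu s (uIoc_subset_uIcc hs')
    have h2 : (s - p) / (c - p) < 1 := by
      refine lt_of_le_of_ne h1 fun h => hs ?_
      rw [div_eq_one_iff_eq hcp] at h
      linarith
    set u := (s - p) / (c - p)
    have t0 := tendsto_pow_atTop_nhds_zero_of_lt_one h0 h2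
    have t1 : Tendsto (fun n : ℕ => u ^ (n + 1)) atTop (𝓝 0) := (tendsto_add_atTop_iff_nat 1).2 t0
    have t2 : Tendsto (fun n : ℕ => u ^ (n + 2)) atTop (𝓝 0) := (tendsto_add_atTop_iff_nat 2).2 t0
    have t3 : Tendsto (fun n : ℕ => u ^ (n + 2) / ((n : ℝ) + 2)) atTop (𝓝 0) := by
      refine squeeze_zero (fun n => by positivity) (fun n => ?_) t2
      refine div_le_self (by positivity) ?_
      have : (0 : ℝ) ≤ n := n.cast_nonneg
      linarith
    have := (((t1.const_mul k).const_sub (τ' s)).pow 2 |>.const_mul e).add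
      (((t3.const_mul (k * (c - p))).const_sub (τ s)).pow 2 |>.const_mul (g s))
    simpa only [mul_zero, sub_zero, mul_div_assoc] using this

open Set Filter Topology in
theorem competitor_deriv (p c : ℝ) (hpc : p ≠ c) (k : ℝ) (τ : ℝ → ℝ) (d s : ℝ) (n : ℕ)
    (h : HasDerivAt τ d s) :
    HasDerivAt (fun s => τ s - k * (c - p) * ((s - p) / (c - p)) ^ (n + 2) / ((n : ℝ) + 2))
      (d - k * ((s - p) / (c - p)) ^ (n + 1)) s := by
  have hcp : c - p ≠ 0 := sub_ne_zero.mpr hpc.symm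
  have hn2 : (n : ℝ) + 2 ≠ 0 := by positivity
  have h1 : HasDerivAt (fun s => (s - p) / (c - p)) (1 / (c - p)) s :=
    ((hasDerivAt_id s).sub_const p).div_const (c - p)
  have h2 := h.sub (((h1.pow (n + 2)).const_mul (k * (c - p))).div_const ((n : ℝ) + 2))
  refine h2.congr_deriv ?_
  have : n + 2 - 1 = n + 1 := rfl
  rw [this]
  push_cast
  field_simp

theorem stmt_13 (a b : ℝ) (hab : a < b) (f : ℝ → ℝ)
    (hf : ContinuousOn f (Set.Icc a b))
    (c : ℝ) (hc : c ∈ Set.Ioo a b)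
    (M : ℝ) (hM : 0 < M)
    (h₁ : ∀ τ₁ τ₁' : ℝ → ℝ,
      (∀ s ∈ Set.Icc a c, HasDerivAt τ₁ (τ₁' s) s) →
      ContinuousOn τ₁' (Set.Icc a c) →
      τ₁' a = 0 → τ₁' c = 0 →
      (∫ s in a..c, (τ₁' s ^ 2 + f s * τ₁ s ^ 2)) ≥ M * ∫ s in a..c, τ₁ s ^ 2)
    (h₂ : ∀ τ₂ τ₂' : ℝ → ℝ,
      (∀ s ∈ Set.Icc c b, HasDerivAt τ₂ (τ₂' s) s) →
      ContinuousOn τ₂' (Set.Icc c b) →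
      τ₂' c = 0 → τ₂' b = 0 →
      (∫ s in c..b, (τ₂' s ^ 2 + f s * τ₂ s ^ 2)) ≥ M * ∫ s in c..b, τ₂ s ^ 2) :
    ∃ M' > 0, ∀ τ τ' : ℝ → ℝ,
      (∀ s ∈ Set.Icc a b, HasDerivAt τ (τ' s) s) →
      ContinuousOn τ' (Set.Icc a b) →
      τ' a = 0 → τ' b = 0 →
      (∫ s in a..b, (τ' s ^ 2 + f s * τ s ^ 2)) ≥ M' * ∫ s in a..b, τ s ^ 2 := by
  obtain ⟨hac, hcb⟩ := hc
  refine ⟨M, hM, fun τ τ' hd hc' ha hb => ?_⟩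
  have hτ : ContinuousOn τ (Set.Icc a b) := fun s hs => (hd s hs).continuousAt.continuousWithinAt
  have s1 : Set.Icc a c ⊆ Set.Icc a b := Set.Icc_subset_Icc_right hcb.le
  have s2 : Set.Icc c b ⊆ Set.Icc a b := Set.Icc_subset_Icc_left hac.le
  have u1 : Set.uIcc a c = Set.Icc a c := Set.uIcc_of_le hac.le
  have u2 : Set.uIcc b c = Set.Icc c b := Set.uIcc_of_ge hcb.le
  have u2' : Set.uIcc c b = Set.Icc c b := Set.uIcc_of_le hcb.le
  have k1 : (∫ s in a..c, (τ' s ^ 2 + f s * τ s ^ 2)) ≥ M * ∫ s in a..c, τ s ^ 2 := by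
    have A := approx_lemma a c hac.ne 1 (τ' c) f τ τ' (u1 ▸ hf.mono s1) (u1 ▸ hτ.mono s1)
      (u1 ▸ hc'.mono s1)
    have B := approx_lemma a c hac.ne 0 (τ' c) (fun _ => 1) τ τ' continuousOn_const
      (u1 ▸ hτ.mono s1) (u1 ▸ hc'.mono s1)
    simp only [one_mul, zero_mul, zero_add] at A B
    refine le_of_tendsto_of_tendsto' (B.const_mul M) A fun n => ?_
    refine h₁ _ (fun s => τ' s - τ' c * ((s - a) / (c - a)) ^ (n + 1))
      (fun s hs => competitor_deriv a c hac.ne (τ' c) τ (τ' s) s n (hd s (s1 hs))) ?_ ?_ ?_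
    · have := hc'.mono s1
      simp only [div_eq_mul_inv]
      fun_prop
    · simp [ha]
    · simp [div_self (sub_ne_zero.mpr hac.ne')]
  have k2 : (∫ s in c..b, (τ' s ^ 2 + f s * τ s ^ 2)) ≥ M * ∫ s in c..b, τ s ^ 2 := by
    have A := (approx_lemma b c hcb.ne' 1 (τ' c) f τ τ' (u2 ▸ hf.mono s2) (u2 ▸ hτ.mono s2)
      (u2 ▸ hc'.mono s2)).neg
    have B := (approx_lemma b c hcb.ne' 0 (τ' c) (fun _ => 1) τ τ' continuousOn_const
      (u2 ▸ hτ.mono s2) (u2 ▸ hc'.mono s2)).neg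
    simp only [one_mul, zero_mul, zero_add, ← intervalIntegral.integral_symm] at A B
    refine le_of_tendsto_of_tendsto' (B.const_mul M) A fun n => ?_
    refine h₂ _ (fun s => τ' s - τ' c * ((s - b) / (c - b)) ^ (n + 1))
      (fun s hs => competitor_deriv b c hcb.ne' (τ' c) τ (τ' s) s n (hd s (s2 hs))) ?_ ?_ ?_
    · have := hc'.mono s2
      simp only [div_eq_mul_inv]
      fun_prop
    · simp [div_self (sub_ne_zero.mpr hcb.ne)]
    · simp [hb]
  have c1 : ContinuousOn (fun s => τ' s ^ 2 + f s * τ s ^ 2) (Set.Icc a b) := by fun_prop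
  have c2 : ContinuousOn (fun s => τ s ^ 2) (Set.Icc a b) := by fun_prop
  have i1 : ∀ g : ℝ → ℝ, ContinuousOn g (Set.Icc a b) →
      (∫ s in a..c, g s) + (∫ s in c..b, g s) = ∫ s in a..b, g s := fun g hg =>
    intervalIntegral.integral_add_adjacent_intervals
      (ContinuousOn.intervalIntegrable (u1 ▸ hg.mono s1))
      (ContinuousOn.intervalIntegrable (u2' ▸ hg.mono s2))
  rw [← i1 _ c1, ← i1 _ c2]
  linarith
end

section
/- Let θ ∈ C²([s₁,s₂],ℝ) satisfy θ''(s) + V'(θ(s)) = 0 for all s ∈ [s₁,s₂], with no s ∈ [s₁,s₂] such that θ'(s) = 0 and V'(θ(s)) = 0 simultaneously, and assume V' and V'' have no common zero. Assume the sets Z_h = {s ∈ [s₁,s₂] : θ'(s) = 0}, Z_m = {s ∈ [s₁,s₂] : V'(θ(s)) = 0 and V''(θ(s)) > 0}, and Z_M = {s ∈ [s₁,s₂] : V'(θ(s)) = 0 and V''(θ(s)) < 0} are finite, and set I = |Z_h| and J = |Z_m| − |Z_M| (as integers). Then I − 1 ≤ J ≤ I + 1, and consequently J ≥ −1. -/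
theorem alt_sum (σ : ℝ → ℤ) (Z : Finset ℝ) :
    (∀ x ∈ Z, σ x = 1 ∨ σ x = -1) →
    (∀ x ∈ Z, ∀ y ∈ Z, x < y → σ x = σ y → ∃ z ∈ Z, x < z ∧ z < y) →
    (Z = ∅ ∨ ∃ m ∈ Z, (∀ x ∈ Z, x ≤ m) ∧ (∑ x ∈ Z, σ x = 0 ∨ ∑ x ∈ Z, σ x = σ m)) := by
  induction Z using Finset.induction_on_max with
  | empty => intros; left; rfl
  | insert a s ha ih =>
    intro h1 h2
    right
    have has : a ∉ s := fun h => lt_irrefl _ (ha a h)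
    refine ⟨a, Finset.mem_insert_self _ _, ?_, ?_⟩
    · intro x hx
      rcases Finset.mem_insert.1 hx with rfl | hx
      · exact le_rfl
      · exact (ha x hx).le
    rw [Finset.sum_insert has]
    have := ih (fun x hx => h1 x (Finset.mem_insert_of_mem hx)) (by
      intro x hx y hy hxy hs
      obtain ⟨z, hz, hxz, hzy⟩ := h2 x (Finset.mem_insert_of_mem hx) y
        (Finset.mem_insert_of_mem hy) hxy hs
      refine ⟨z, ?_, hxz, hzy⟩
      rcases Finset.mem_insert.1 hz with rfl | hz
      · exact absurd (ha y hy) (not_lt.2 hzy.le)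
      · exact hz)
    rcases this with rfl | ⟨m, hm, hmax, hsum⟩
    · right; simp
    · have hne : σ m ≠ σ a := by
        intro he
        obtain ⟨z, hz, h3, h4⟩ := h2 m (Finset.mem_insert_of_mem hm) a
          (Finset.mem_insert_self _ _) (ha m hm) he
        rcases Finset.mem_insert.1 hz with rfl | hz
        · exact lt_irrefl _ h4
        · exact absurd (hmax z hz) (not_le.2 h3)
      have e1 := h1 m (Finset.mem_insert_of_mem hm)
      have e2 := h1 a (Finset.mem_insert_self _ _)
      omega

theorem zero_between (h : ℝ → ℝ) (x y p q : ℝ) (hxy : x < y)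
    (hc : ContinuousOn h (Set.Icc x y)) (hx : HasDerivAt h p x) (hy : HasDerivAt h q y)
    (hx0 : h x = 0) (hy0 : h y = 0) (hp : 0 < p) (hq : 0 < q) :
    ∃ z, x < z ∧ z < y ∧ h z = 0 := by
  have h1 : ∀ᶠ t in nhdsWithin x (Set.Ioi x), 0 < h t := by
    have := (hasDerivAt_iff_tendsto_slope.1 hx).mono_left
      (nhdsWithin_mono x (fun t (ht : x < t) => ne_of_gt ht))
    filter_upwards [this.eventually (lt_mem_nhds hp), self_mem_nhdsWithin] with t ht hxt
    have hxt' : 0 < t - x := sub_pos.2 hxt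
    rw [slope_def_field, hx0, sub_zero] at ht
    exact (div_pos_iff_of_pos_right hxt').1 ht
  have h2 : ∀ᶠ t in nhdsWithin y (Set.Iio y), h t < 0 := by
    have := (hasDerivAt_iff_tendsto_slope.1 hy).mono_left
      (nhdsWithin_mono y (fun t (ht : t < y) => ne_of_lt ht))
    filter_upwards [this.eventually (lt_mem_nhds hq), self_mem_nhdsWithin] with t ht hxt
    have hxt' : t - y < 0 := sub_neg.2 hxt
    rw [slope_def_field, hy0, sub_zero] at ht
    by_contra hcon
    exact absurd ht (not_lt.2 (div_nonpos_of_nonneg_of_nonpos (not_lt.1 hcon) hxt'.le))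
  have hm1 : x < (x + y) / 2 := by linarith
  have hm2 : (x + y) / 2 < y := by linarith
  obtain ⟨a, ha, ha1, ha2⟩ := (h1.and (Ioo_mem_nhdsGT hm1)).exists
  obtain ⟨b, hb, hb1, hb2⟩ := (h2.and (Ioo_mem_nhdsLT hm2)).exists
  have hab : a ≤ b := by linarith
  obtain ⟨z, ⟨hz1, hz2⟩, hz⟩ := intermediate_value_Icc' hab
    (hc.mono (Set.Icc_subset_Icc ha1.le hb2.le)) (show (0:ℝ) ∈ Set.Icc (h b) (h a) from ⟨hb.le, ha.le⟩)
  exact ⟨z, by linarith, by linarith, hz⟩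

theorem count_zeros (a b : ℝ) (h h' : ℝ → ℝ) (A B : Finset ℝ)
    (hd : ∀ s ∈ Set.Icc a b, HasDerivAt h (h' s) s)
    (hA : ∀ s ∈ A, s ∈ Set.Icc a b ∧ h s = 0 ∧ 0 < h' s)
    (hB : ∀ s ∈ B, s ∈ Set.Icc a b ∧ h s = 0 ∧ h' s < 0)
    (hAB : ∀ s ∈ Set.Icc a b, h s = 0 → s ∈ A ∪ B) :
    (B.card : ℤ) - 1 ≤ A.card ∧ (A.card : ℤ) ≤ B.card + 1 := by
  classical
  have hdisj : Disjoint A B := by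
    rw [Finset.disjoint_left]
    intro s h1 h2
    exact lt_asymm (hA s h1).2.2 (hB s h2).2.2
  let σ : ℝ → ℤ := fun s => if 0 < h' s then 1 else -1
  have sA : ∀ s ∈ A, σ s = 1 := fun s hs => if_pos (hA s hs).2.2
  have sB : ∀ s ∈ B, σ s = -1 := fun s hs => if_neg (not_lt.2 (hB s hs).2.2.le)
  have hsum : ∑ x ∈ A ∪ B, σ x = (A.card : ℤ) - B.card := by
    rw [Finset.sum_union hdisj, Finset.sum_congr rfl sA, Finset.sum_congr rfl sB]
    simp [sub_eq_add_neg]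
  have hσ : ∀ x ∈ A ∪ B, σ x = 1 ∨ σ x = -1 := by
    intro x hx
    rcases Finset.mem_union.1 hx with hx | hx
    · exact Or.inl (sA x hx)
    · exact Or.inr (sB x hx)
  have key := alt_sum σ (A ∪ B) hσ (by
    intro x hx y hy hxy hs
    have main : ∃ z, x < z ∧ z < y ∧ h z = 0 := by
      rcases Finset.mem_union.1 hx with hx | hx <;> rcases Finset.mem_union.1 hy with hy | hy
      · exact zero_between h x y _ _ hxy
          (fun t ht => (hd t ⟨(hA x hx).1.1.trans ht.1, ht.2.trans (hA y hy).1.2⟩).continuousAt.continuousWithinAt)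
          (hd x (hA x hx).1) (hd y (hA y hy).1) (hA x hx).2.1 (hA y hy).2.1 (hA x hx).2.2 (hA y hy).2.2
      · rw [sA x hx, sB y hy] at hs; norm_num at hs
      · rw [sB x hx, sA y hy] at hs; norm_num at hs
      · obtain ⟨z, h1, h2, h3⟩ := zero_between (fun t => -h t) x y (-h' x) (-h' y) hxy
          (fun t ht => (hd t ⟨(hB x hx).1.1.trans ht.1, ht.2.trans (hB y hy).1.2⟩).continuousAt.neg.continuousWithinAt)
          (hd x (hB x hx).1).fun_neg (hd y (hB y hy).1).fun_neg (by simp [(hB x hx).2.1])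
          (by simp [(hB y hy).2.1]) (by linarith [(hB x hx).2.2]) (by linarith [(hB y hy).2.2])
        exact ⟨z, h1, h2, by simpa using h3⟩
    obtain ⟨z, h1, h2, h3⟩ := main
    have hI : ∀ w ∈ A ∪ B, w ∈ Set.Icc a b := by
      intro w hw
      rcases Finset.mem_union.1 hw with hw | hw
      · exact (hA w hw).1
      · exact (hB w hw).1
    exact ⟨z, hAB z ⟨(hI x hx).1.trans h1.le, h2.le.trans (hI y hy).2⟩ h3, h1, h2⟩)
  rcases key with he | ⟨m, hm, -, hk⟩
  · rw [he, Finset.sum_empty] at hsum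
    omega
  · have := hσ m hm
    omega

theorem stmt_14 (s₁ s₂ : ℝ) (hs : s₁ < s₂) (V : ℝ → ℝ) (hV : ContDiff ℝ 2 V)
    (θ θ' θ'' : ℝ → ℝ)
    (hθ1 : ∀ s ∈ Set.Icc s₁ s₂, HasDerivAt θ (θ' s) s)
    (hθ2 : ∀ s ∈ Set.Icc s₁ s₂, HasDerivAt θ' (θ'' s) s)
    (hθc : ContinuousOn θ'' (Set.Icc s₁ s₂))
    (hEL : ∀ s ∈ Set.Icc s₁ s₂, θ'' s + deriv V (θ s) = 0)
    (hnosim : ∀ s ∈ Set.Icc s₁ s₂, ¬(θ' s = 0 ∧ deriv V (θ s) = 0))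
    (hVnodeg : ∀ x : ℝ, ¬(deriv V x = 0 ∧ deriv (deriv V) x = 0))
    (hZh : {s : ℝ | s ∈ Set.Icc s₁ s₂ ∧ θ' s = 0}.Finite)
    (hZm : {s : ℝ | s ∈ Set.Icc s₁ s₂ ∧ deriv V (θ s) = 0 ∧
      0 < deriv (deriv V) (θ s)}.Finite)
    (hZM : {s : ℝ | s ∈ Set.Icc s₁ s₂ ∧ deriv V (θ s) = 0 ∧
      deriv (deriv V) (θ s) < 0}.Finite)
    (I J : ℤ)
    (hI : I = ({s : ℝ | s ∈ Set.Icc s₁ s₂ ∧ θ' s = 0}.ncard : ℤ))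
    (hJ : J = ({s : ℝ | s ∈ Set.Icc s₁ s₂ ∧ deriv V (θ s) = 0 ∧
        0 < deriv (deriv V) (θ s)}.ncard : ℤ) -
      ({s : ℝ | s ∈ Set.Icc s₁ s₂ ∧ deriv V (θ s) = 0 ∧
        deriv (deriv V) (θ s) < 0}.ncard : ℤ)) :
    I - 1 ≤ J ∧ J ≤ I + 1 ∧ -1 ≤ J := by
  classical
  have hV1 : Differentiable ℝ (deriv V) := by
    have : ContDiff ℝ (1 + 1) V := by simpa [one_add_one_eq_two] using hV
    exact (contDiff_succ_iff_deriv.1 this).2.2.differentiable (by norm_num)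
  have hg : ∀ s ∈ Set.Icc s₁ s₂,
      HasDerivAt (fun t => deriv V (θ t)) (deriv (deriv V) (θ s) * θ' s) s := fun s hs' =>
    (hV1 (θ s)).hasDerivAt.comp s (hθ1 s hs')
  have hdisj : Disjoint hZh.toFinset hZM.toFinset := by
    rw [Finset.disjoint_left]
    intro s h1 h2
    rw [Set.Finite.mem_toFinset] at h1 h2
    exact hnosim s h1.1 ⟨h1.2, h2.2.1⟩
  have key := count_zeros s₁ s₂ (fun t => θ' t * deriv V (θ t))
    (fun s => θ'' s * deriv V (θ s) + θ' s * (deriv (deriv V) (θ s) * θ' s))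
    hZm.toFinset (hZh.toFinset ∪ hZM.toFinset)
    (fun s hs' => (hθ2 s hs').mul (hg s hs'))
    (by
      intro s hs'
      rw [Set.Finite.mem_toFinset] at hs'
      obtain ⟨h1, h2, h3⟩ := hs'
      have hne : θ' s ≠ 0 := fun h => hnosim s h1 ⟨h, h2⟩
      refine ⟨h1, by simp [h2], ?_⟩
      have : 0 < deriv (deriv V) (θ s) * (θ' s) ^ 2 := by positivity
      simp only [h2]
      nlinarith)
    (by
      intro s hs'
      rw [Finset.mem_union, Set.Finite.mem_toFinset, Set.Finite.mem_toFinset] at hs'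
      rcases hs' with ⟨h1, h2⟩ | ⟨h1, h2, h3⟩
      · have hne : deriv V (θ s) ≠ 0 := fun h => hnosim s h1 ⟨h2, h⟩
        refine ⟨h1, by simp [h2], ?_⟩
        have e : θ'' s = - deriv V (θ s) := by linarith [hEL s h1]
        have : 0 < (deriv V (θ s)) ^ 2 := by positivity
        simp only [h2, e]
        nlinarith
      · have hne : θ' s ≠ 0 := fun h => hnosim s h1 ⟨h, h2⟩
        refine ⟨h1, by simp [h2], ?_⟩
        have h4 : 0 < (θ' s) ^ 2 := by positivity
        have := mul_neg_of_neg_of_pos h3 h4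
        simp only [h2]
        nlinarith)
    (by
      intro s hs' h0
      simp only [Finset.mem_union, Set.Finite.mem_toFinset, Set.mem_setOf_eq]
      rcases mul_eq_zero.1 h0 with h | h
      · exact Or.inr (Or.inl ⟨hs', h⟩)
      · rcases lt_trichotomy (deriv (deriv V) (θ s)) 0 with h' | h' | h'
        · exact Or.inr (Or.inr ⟨hs', h, h'⟩)
        · exact absurd ⟨h, h'⟩ (hVnodeg _)
        · exact Or.inl ⟨hs', h, h'⟩)
  rw [Finset.card_union_of_disjoint hdisj] at key
  rw [Set.ncard_eq_toFinset_card _ hZh] at hI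
  rw [Set.ncard_eq_toFinset_card _ hZm, Set.ncard_eq_toFinset_card _ hZM] at hJ
  push_cast at key
  omega
end

section
/- Let θ ∈ C²([a,b],ℝ) satisfy θ''(s) + V'(θ(s)) = 0 for all s ∈ [a,b], with V'(θ(a)) ≠ 0 and V'(θ(b)) ≠ 0. Define ξ(s) = θ'(s)·V'(θ(s)) and β = ξ(a) − ξ(b). If β ≤ 0, then there exists a Neumann-admissible perturbation τ with ∫_a^b (τ'(s)² − V''(θ(s))·τ(s)²) ds < 0. -/
/-- Choice of the exponent `k + 2` making the boundary gain dominate. -/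
lemma exists_exponent (L M : ℝ) (hL : 0 < L) (hM : 0 ≤ M) :
    ∃ k : ℕ, 2 * L / (2 * (k:ℝ) + 3) + 2 * M * L ^ 3 / (((k:ℝ) + 2) ^ 2 * (2 * (k:ℝ) + 5))
      < 2 * L / ((k:ℝ) + 2) := by
  obtain ⟨k, hk⟩ := exists_nat_gt (M * L ^ 2)
  refine ⟨k, ?_⟩
  have hk0 : (0:ℝ) ≤ k := Nat.cast_nonneg k
  generalize (k:ℝ) = x at hk hk0
  have key : 2 * L / (x + 2) - 2 * L / (2 * x + 3) - 2 * M * L ^ 3 / ((x + 2) ^ 2 * (2 * x + 5))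
      = 2 * L * ((x + 1) * (x + 2) * (2 * x + 5) - M * L ^ 2 * (2 * x + 3)) /
        ((x + 2) ^ 2 * (2 * x + 3) * (2 * x + 5)) := by
    field_simp
    ring
  have h1 : 0 < (x + 1) * (x + 2) * (2 * x + 5) - M * L ^ 2 * (2 * x + 3) := by
    have : M * L ^ 2 * (2 * x + 3) ≤ x * (2 * x + 3) := by gcongr
    have : 0 ≤ x * x * x := by positivity
    nlinarith
  have h2 : 0 < 2 * L * ((x + 1) * (x + 2) * (2 * x + 5) - M * L ^ 2 * (2 * x + 3)) /
        ((x + 2) ^ 2 * (2 * x + 3) * (2 * x + 5)) := by positivity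
  linarith

theorem stmt_16 (a b : ℝ) (hab : a < b) (V : ℝ → ℝ) (hV : ContDiff ℝ 2 V)
    (θ θ' θ'' : ℝ → ℝ)
    (hθ1 : ∀ s ∈ Set.Icc a b, HasDerivAt θ (θ' s) s)
    (hθ2 : ∀ s ∈ Set.Icc a b, HasDerivAt θ' (θ'' s) s)
    (hθc : ContinuousOn θ'' (Set.Icc a b))
    (hEL : ∀ s ∈ Set.Icc a b, θ'' s + deriv V (θ s) = 0)
    (hVa : deriv V (θ a) ≠ 0) (hVb : deriv V (θ b) ≠ 0)
    (hβ : θ' a * deriv V (θ a) - θ' b * deriv V (θ b) ≤ 0) :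
    ∃ τ τ' : ℝ → ℝ,
      (∀ s ∈ Set.Icc a b, HasDerivAt τ (τ' s) s) ∧
      ContinuousOn τ' (Set.Icc a b) ∧
      (∃ s ∈ Set.Icc a b, τ s ≠ 0) ∧
      τ' a = 0 ∧ τ' b = 0 ∧
      (∫ s in a..b, (τ' s ^ 2 - deriv (deriv V) (θ s) * τ s ^ 2)) < 0 := by
  have hL : 0 < b - a := sub_pos.2 hab
  have hV1 : ContDiff ℝ 1 (deriv V) := by
    have : ContDiff ℝ (1 + 1) V := by simpa [one_add_one_eq_two] using hV
    exact (contDiff_succ_iff_deriv.1 this).2.2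
  have hV2 : Continuous (deriv (deriv V)) := hV1.continuous_deriv le_rfl
  have hθcont : ContinuousOn θ (Set.Icc a b) := fun s hs => (hθ1 s hs).continuousAt.continuousWithinAt
  have hucont : ContinuousOn θ' (Set.Icc a b) := fun s hs => (hθ2 s hs).continuousAt.continuousWithinAt
  set w : ℝ → ℝ := fun s => - deriv V (θ s) with hw
  set q : ℝ → ℝ := fun s => deriv (deriv V) (θ s) with hq
  have hqc : ContinuousOn q (Set.Icc a b) := hV2.comp_continuousOn hθcont
  have hwc : ContinuousOn w (Set.Icc a b) := (hV1.continuous.comp_continuousOn hθcont).neg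
  have hu : ∀ s ∈ Set.Icc a b, HasDerivAt θ' (w s) s := by
    intro s hs
    have h : θ'' s = w s := by have := hEL s hs; simp only [hw]; linarith
    exact h ▸ hθ2 s hs
  have hwd : ∀ s ∈ Set.Icc a b, HasDerivAt w (- (q s * θ' s)) s := by
    intro s hs
    have h1 : HasDerivAt (deriv V) (q s) (θ s) :=
      ((hV1.differentiable one_ne_zero) (θ s)).hasDerivAt
    exact (h1.comp s (hθ1 s hs)).neg
  obtain ⟨M, hM⟩ := isCompact_Icc.exists_bound_of_continuousOn hqc
  have hM0 : 0 ≤ M := (norm_nonneg _).trans (hM a ⟨le_rfl, hab.le⟩)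
  obtain ⟨k, hk⟩ := exists_exponent (b - a) M hL hM0
  have hma : w a ≠ 0 := neg_ne_zero.2 hVa
  have hβ' : θ' b * w b - θ' a * w a ≤ 0 := by simp only [hw]; linarith
  set m := w a with hm
  set n := w b with hn
  obtain ⟨L, hLdef⟩ : ∃ L, L = b - a := ⟨_, rfl⟩
  rw [← hLdef] at hL hk
  have hx0 : (0:ℝ) ≤ k := Nat.cast_nonneg k
  let p : ℝ → ℝ := fun s => (b - s) / L
  let r : ℝ → ℝ := fun s => (s - a) / L
  have hp : ∀ s, HasDerivAt p (-1 / L) s := fun s => ((hasDerivAt_id s).const_sub b).div_const L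
  have hr : ∀ s, HasDerivAt r (1 / L) s := fun s => ((hasDerivAt_id s).sub_const a).div_const L
  have hpa : p a = 1 := by simp only [p]; rw [← hLdef]; exact div_self hL.ne'
  have hrb : r b = 1 := by simp only [r]; rw [← hLdef]; exact div_self hL.ne'
  have hpb : p b = 0 := by simp [p]
  have hra : r a = 0 := by simp [r]
  have hpc : Continuous p := by fun_prop
  have hrc : Continuous r := by fun_prop
  let φ : ℝ → ℝ := fun s => m * L / (k + 2) * p s ^ (k + 2) - n * L / (k + 2) * r s ^ (k + 2)
  let φ' : ℝ → ℝ := fun s => - m * p s ^ (k + 1) - n * r s ^ (k + 1)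
  have hφ : ∀ s, HasDerivAt φ (φ' s) s := by
    intro s
    have := (((hp s).pow (k + 2)).const_mul (m * L / (k + 2))).sub
      (((hr s).pow (k + 2)).const_mul (n * L / (k + 2)))
    refine HasDerivAt.congr_deriv this ?_
    simp only [φ']
    push_cast
    field_simp
  have hφc : Continuous φ := by fun_prop
  have hφ'c : Continuous φ' := by fun_prop
  let g : ℝ → ℝ := fun s => 2 * m ^ 2 * p s ^ (2 * k + 2) + 2 * n ^ 2 * r s ^ (2 * k + 2)
    + 2 * M * (L / (k + 2)) ^ 2 * (m ^ 2 * p s ^ (2 * k + 4) + n ^ 2 * r s ^ (2 * k + 4))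
  let G : ℝ → ℝ := fun s => 2 * L / (2 * k + 3) * (n ^ 2 * r s ^ (2 * k + 3) - m ^ 2 * p s ^ (2 * k + 3))
    + 2 * M * L ^ 3 / ((k + 2) ^ 2 * (2 * k + 5)) *
      (n ^ 2 * r s ^ (2 * k + 5) - m ^ 2 * p s ^ (2 * k + 5))
  have hG : ∀ s, HasDerivAt G (g s) s := by
    intro s
    have := (((((hr s).pow (2 * k + 3)).const_mul (n ^ 2)).sub
      (((hp s).pow (2 * k + 3)).const_mul (m ^ 2))).const_mul (2 * L / (2 * k + 3))).add
      (((((hr s).pow (2 * k + 5)).const_mul (n ^ 2)).sub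
      (((hp s).pow (2 * k + 5)).const_mul (m ^ 2))).const_mul
        (2 * M * L ^ 3 / ((k + 2) ^ 2 * (2 * k + 5))))
    refine HasDerivAt.congr_deriv this ?_
    simp only [g]
    push_cast
    field_simp
    ring
  have hgc : Continuous g := by fun_prop
  have hφg : ∀ s ∈ Set.Icc a b, φ' s ^ 2 - q s * φ s ^ 2 ≤ g s := by
    intro s hs
    have h1 : - q s ≤ M := (neg_le_abs _).trans (hM s hs)
    have h2 : - q s * φ s ^ 2 ≤ M * φ s ^ 2 := by gcongr
    have h3 : φ s ^ 2 ≤ 2 * (L / (k + 2)) ^ 2 * (m ^ 2 * p s ^ (2 * k + 4) + n ^ 2 * r s ^ (2 * k + 4)) := by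
      have : 0 ≤ (m * L / (k + 2) * p s ^ (k + 2) + n * L / (k + 2) * r s ^ (k + 2)) ^ 2 := sq_nonneg _
      have e : 2 * (L / (k + 2)) ^ 2 * (m ^ 2 * p s ^ (2 * k + 4) + n ^ 2 * r s ^ (2 * k + 4)) =
        φ s ^ 2 + (m * L / (k + 2) * p s ^ (k + 2) + n * L / (k + 2) * r s ^ (k + 2)) ^ 2 := by
        simp only [φ]; ring
      linarith
    have h4 : φ' s ^ 2 ≤ 2 * m ^ 2 * p s ^ (2 * k + 2) + 2 * n ^ 2 * r s ^ (2 * k + 2) := by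
      have : 0 ≤ (m * p s ^ (k + 1) - n * r s ^ (k + 1)) ^ 2 := sq_nonneg _
      have e : 2 * m ^ 2 * p s ^ (2 * k + 2) + 2 * n ^ 2 * r s ^ (2 * k + 2) =
        φ' s ^ 2 + (m * p s ^ (k + 1) - n * r s ^ (k + 1)) ^ 2 := by
        simp only [φ']; ring
      linarith
    have h5 := mul_le_mul_of_nonneg_left h3 hM0
    simp only [g]
    nlinarith
  let F : ℝ → ℝ := fun s => θ' s * w s + 2 * (w s * φ s) + G s
  let f : ℝ → ℝ := fun s => (w s * w s + θ' s * -(q s * θ' s)) +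
    2 * (-(q s * θ' s) * φ s + w s * φ' s) + g s
  have hF : ∀ s ∈ Set.Icc a b, HasDerivAt F (f s) s := fun s hs =>
    (((hu s hs).mul (hwd s hs)).add (((hwd s hs).mul (hφ s)).const_mul 2)).add (hG s)
  have hfc : ContinuousOn f (Set.Icc a b) := by
    have := hφc.continuousOn (s := Set.Icc a b)
    have := hφ'c.continuousOn (s := Set.Icc a b)
    have := hgc.continuousOn (s := Set.Icc a b)
    simp only [f]
    fun_prop
  have hcτ : ContinuousOn (fun s => (w s + φ' s) ^ 2 - q s * (θ' s + φ s) ^ 2) (Set.Icc a b) := by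
    have := hφc.continuousOn (s := Set.Icc a b)
    have := hφ'c.continuousOn (s := Set.Icc a b)
    fun_prop
  have hfi : IntervalIntegrable f MeasureTheory.volume a b :=
    hfc.intervalIntegrable_of_Icc hab.le
  have hint : ∫ s in a..b, f s = F b - F a :=
    intervalIntegral.integral_eq_sub_of_hasDerivAt
      (fun s hs => hF s (by rwa [Set.uIcc_of_le hab.le] at hs)) hfi
  have hle : ∫ s in a..b, ((w s + φ' s) ^ 2 - q s * (θ' s + φ s) ^ 2) ≤ ∫ s in a..b, f s := by
    apply intervalIntegral.integral_mono_on hab.le (hcτ.intervalIntegrable_of_Icc hab.le) hfi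
    intro s hs
    have := hφg s hs
    simp only [f]
    linarith
  have hFneg : F b - F a < 0 := by
    have e : F b - F a = (θ' b * n - θ' a * m) + (m ^ 2 + n ^ 2) *
      (2 * L / (2 * (k:ℝ) + 3) + 2 * M * L ^ 3 / (((k:ℝ) + 2) ^ 2 * (2 * (k:ℝ) + 5))
        - 2 * L / ((k:ℝ) + 2)) := by
      simp only [F, G, φ, hpa, hpb, hra, hrb, ← hm, ← hn, one_pow]
      simp only [ne_eq, Nat.add_eq_zero_iff, OfNat.ofNat_ne_zero, and_false, not_false_eq_true, zero_pow]
      ring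
    have hpos : 0 < m ^ 2 + n ^ 2 := by positivity
    have := mul_neg_of_pos_of_neg hpos (sub_neg.2 hk)
    rw [e]; linarith
  have hneg : ∫ s in a..b, ((w s + φ' s) ^ 2 - q s * (θ' s + φ s) ^ 2) < 0 := by linarith
  refine ⟨fun s => θ' s + φ s, fun s => w s + φ' s, fun s hs => (hu s hs).add (hφ s),
    hwc.add hφ'c.continuousOn, ?_, ?_, ?_, hneg⟩
  · by_contra! hz
    refine absurd hneg (not_lt.2 (intervalIntegral.integral_nonneg hab.le fun s hs => ?_))
    rw [hz s hs]
    nlinarith [sq_nonneg (w s + φ' s)]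
  · simp [φ', hpa, hra, ← hm]
  · simp [φ', hpb, hrb, ← hn]
end

section
/- Let θ ∈ C²([a,b],ℝ) satisfy θ''(s) + V'(θ(s)) = 0 for all s ∈ [a,b], with V'(θ(a)) ≠ 0, V'(θ(b)) ≠ 0, no s ∈ [a,b] with θ'(s) = 0 and V'(θ(s)) = 0 simultaneously, and assume V' and V'' have no common zero. Assume that the sets {s ∈ [a,b] : θ'(s) = 0}, {s ∈ [a,b] : V'(θ(s)) = 0 and V''(θ(s)) > 0} and {s ∈ [a,b] : V'(θ(s)) = 0 and V''(θ(s)) < 0} are finite, and that θ' vanishes at two or more points of [a,b]. Then there exists a Neumann-admissible perturbation τ with ∫_a^b (τ'(s)² − V''(θ(s))·τ(s)²) ds < 0. -/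
open Set Filter Topology MeasureTheory

/-- Cutoff function, supported in `[c,d]`, tending to `1` on `(c,d)`. -/
noncomputable def cutN (c d : ℝ) (n : ℕ) (t : ℝ) : ℝ := max 0 (min 1 (n * min (t - c) (d - t)))

lemma cutN_cont (c d : ℝ) (n : ℕ) : Continuous (cutN c d n) := by
  unfold cutN; fun_prop

lemma cutN_nonneg (c d : ℝ) (n : ℕ) (t : ℝ) : 0 ≤ cutN c d n t := le_max_left _ _

lemma cutN_le (c d : ℝ) (n : ℕ) (t : ℝ) : cutN c d n t ≤ 1 :=
  max_le zero_le_one (min_le_left _ _)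

lemma cutN_left (c d : ℝ) (n : ℕ) (t : ℝ) (h : t ≤ c) : cutN c d n t = 0 := by
  unfold cutN
  apply max_eq_left
  refine (min_le_right _ _).trans ?_
  apply mul_nonpos_of_nonneg_of_nonpos (Nat.cast_nonneg n)
  exact (min_le_left _ _).trans (by linarith)

lemma cutN_right (c d : ℝ) (n : ℕ) (t : ℝ) (h : d ≤ t) : cutN c d n t = 0 := by
  unfold cutN
  apply max_eq_left
  refine (min_le_right _ _).trans ?_
  apply mul_nonpos_of_nonneg_of_nonpos (Nat.cast_nonneg n)
  exact (min_le_right _ _).trans (by linarith)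

lemma cutN_tendsto (c d t : ℝ) (h1 : c < t) (h2 : t < d) :
    Tendsto (fun n => cutN c d n t) atTop (𝓝 1) := by
  have hm : 0 < min (t - c) (d - t) := lt_min (by linarith) (by linarith)
  obtain ⟨N, hN⟩ := exists_nat_gt (1 / min (t - c) (d - t))
  apply tendsto_const_nhds.congr'
  filter_upwards [eventually_ge_atTop N] with n hn
  have : (N : ℝ) ≤ n := by exact_mod_cast hn
  have h3 : 1 ≤ (n : ℝ) * min (t - c) (d - t) := by
    rw [div_lt_iff₀ hm] at hN
    nlinarith
  unfold cutN
  rw [min_eq_left h3, max_eq_right zero_le_one]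

lemma limit_lemma (a b c d : ℝ) (hac : a ≤ c) (hcd : c < d) (hdb : d ≤ b)
    (q W U : ℝ → ℝ) (hq : ContinuousOn q (Icc a b)) (hW : Continuous W)
    (hU : ∀ s ∈ Icc c d, U s = ∫ t in c..s, W t)
    (hneg : (∫ s in c..d, (W s ^ 2 - q s * U s ^ 2)) + (∫ s in d..b, (- (q s * U d ^ 2))) < 0) :
    ∃ τ τ' : ℝ → ℝ,
      (∀ s ∈ Set.Icc a b, HasDerivAt τ (τ' s) s) ∧
      ContinuousOn τ' (Set.Icc a b) ∧
      (∃ s ∈ Set.Icc a b, τ s ≠ 0) ∧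
      τ' a = 0 ∧ τ' b = 0 ∧
      (∫ s in a..b, (τ' s ^ 2 - q s * τ s ^ 2)) < 0 := by
  have hcut : ∀ n, Continuous (fun t => cutN c d n t * W t) :=
    fun n => (cutN_cont c d n).mul hW
  set T : ℕ → ℝ → ℝ := fun n s => ∫ t in c..s, cutN c d n t * W t with hT
  have hTd : ∀ n s, HasDerivAt (T n) (cutN c d n s * W s) s := fun n s =>
    (hcut n).integral_hasStrictDerivAt c s |>.hasDerivAt
  have hTc : ∀ n, Continuous (T n) := fun n =>
    continuous_iff_continuousAt.2 fun s => (hTd n s).continuousAt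
  obtain ⟨M, hM⟩ : ∃ M, ∀ t ∈ Icc c d, |W t| ≤ M :=
    isCompact_Icc.exists_bound_of_continuousOn hW.continuousOn
  have hM0 : 0 ≤ M := (abs_nonneg _).trans (hM c ⟨le_rfl, hcd.le⟩)
  have hgb : ∀ n, ∀ t ∈ Icc c d, |cutN c d n t * W t| ≤ M := by
    intro n t ht
    rw [abs_mul, abs_of_nonneg (cutN_nonneg c d n t)]
    calc _ ≤ 1 * |W t| := by gcongr; exact cutN_le c d n t
      _ ≤ M := by rw [one_mul]; exact hM t ht
  have hTb : ∀ n, ∀ s ∈ Icc c d, |T n s| ≤ M * (d - c) := by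
    intro n s hs
    have := intervalIntegral.norm_integral_le_of_norm_le_const (a := c) (b := s) (C := M)
      (f := fun t => cutN c d n t * W t) (by
        intro t ht
        rw [uIoc_of_le hs.1] at ht
        exact hgb n t ⟨ht.1.le, ht.2.trans hs.2⟩)
    refine this.trans ?_
    rw [abs_of_nonneg (by linarith [hs.1])]
    have := hs.2
    gcongr
  have hTlim : ∀ s ∈ Icc c d, Tendsto (fun n => T n s) atTop (𝓝 (U s)) := by
    intro s hs
    rw [hU s hs]
    apply intervalIntegral.tendsto_integral_filter_of_dominated_convergence (fun _ => M)
    · exact Eventually.of_forall fun n => (hcut n).aestronglyMeasurable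
    · refine Eventually.of_forall fun n => Eventually.of_forall fun t ht => ?_
      rw [uIoc_of_le hs.1] at ht
      exact hgb n t ⟨ht.1.le, ht.2.trans hs.2⟩
    · exact intervalIntegrable_const
    · have : ∀ᵐ t : ℝ, t ≠ d := by simp [ae_iff]
      filter_upwards [this] with t htd ht
      rw [uIoc_of_le hs.1] at ht
      have := cutN_tendsto c d t ht.1 (lt_of_le_of_ne (ht.2.trans hs.2) htd)
      simpa using this.mul_const (W t)
  have hcont : ∀ n, ContinuousOn (fun s => (cutN c d n s * W s) ^ 2 - q s * T n s ^ 2) (Icc a b) :=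
    fun n => ((hcut n).pow 2).continuousOn.sub (hq.mul ((hTc n).pow 2).continuousOn)
  have hint : ∀ n x y, a ≤ x → x ≤ y → y ≤ b → IntervalIntegrable
      (fun s => (cutN c d n s * W s) ^ 2 - q s * T n s ^ 2) volume x y := by
    intro n x y h1 h2 h3
    exact ((hcont n).mono (Icc_subset_Icc h1 h3)).intervalIntegrable_of_Icc h2
  have hmid : Tendsto (fun n => ∫ s in c..d, ((cutN c d n s * W s) ^ 2 - q s * T n s ^ 2)) atTop
      (𝓝 (∫ s in c..d, (W s ^ 2 - q s * U s ^ 2))) := by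
    apply intervalIntegral.tendsto_integral_filter_of_dominated_convergence
      (fun s => M ^ 2 + |q s| * (M * (d - c)) ^ 2)
    · refine Eventually.of_forall fun n => ?_
      rw [uIoc_of_le hcd.le]
      exact (hint n c d hac hcd.le hdb).1.aestronglyMeasurable
    · refine Eventually.of_forall fun n => Eventually.of_forall fun t ht => ?_
      rw [uIoc_of_le hcd.le] at ht
      have ht' : t ∈ Icc c d := ⟨ht.1.le, ht.2⟩
      rw [Real.norm_eq_abs]
      refine (abs_sub _ _).trans ?_
      rw [abs_mul (q t), abs_pow, abs_pow]
      have h1 := hgb n t ht'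
      have h2 := hTb n t ht'
      gcongr
    · apply ContinuousOn.intervalIntegrable_of_Icc hcd.le
      have := (hq.mono (Icc_subset_Icc hac hdb)).abs
      fun_prop
    · have : ∀ᵐ t : ℝ, t ≠ d := by simp [ae_iff]
      filter_upwards [this] with t htd ht
      rw [uIoc_of_le hcd.le] at ht
      have h1 := cutN_tendsto c d t ht.1 (lt_of_le_of_ne ht.2 htd)
      have h2 := hTlim t ⟨ht.1.le, ht.2⟩
      have h3 := ((h1.mul_const (W t)).pow 2).sub ((h2.pow 2).const_mul (q t))
      simpa using h3
  have hTl : ∀ n, ∀ s ≤ c, T n s = 0 := by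
    intro n s hs
    have : T n s = ∫ t in c..s, (0 : ℝ) := by
      apply intervalIntegral.integral_congr
      intro t ht
      rw [uIcc_of_ge hs] at ht
      simp [cutN_left c d n t ht.2]
    simpa using this
  have hTr : ∀ n s, d ≤ s → T n s = T n d := by
    intro n s hs
    have h0 : (∫ t in d..s, cutN c d n t * W t) = ∫ t in d..s, (0 : ℝ) := by
      apply intervalIntegral.integral_congr
      intro t ht
      rw [uIcc_of_le hs] at ht
      simp [cutN_right c d n t ht.1]
    have h1 := intervalIntegral.integral_add_adjacent_intervals
      ((hcut n).intervalIntegrable (μ := volume) c d) ((hcut n).intervalIntegrable d s)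
    rw [h0] at h1
    simp only [intervalIntegral.integral_zero, add_zero] at h1
    exact h1.symm
  have hright : Tendsto (fun n => ∫ s in d..b, ((cutN c d n s * W s) ^ 2 - q s * T n s ^ 2)) atTop
      (𝓝 (∫ s in d..b, (- (q s * U d ^ 2)))) := by
    have e : ∀ n, (∫ s in d..b, ((cutN c d n s * W s) ^ 2 - q s * T n s ^ 2))
        = -((∫ s in d..b, q s) * T n d ^ 2) := by
      intro n
      rw [← intervalIntegral.integral_mul_const, ← intervalIntegral.integral_neg]
      apply intervalIntegral.integral_congr
      intro t ht
      rw [uIcc_of_le hdb] at ht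
      simp [cutN_right c d n t ht.1, hTr n t ht.1]
    simp_rw [e]
    rw [intervalIntegral.integral_neg, intervalIntegral.integral_mul_const]
    exact (((hTlim d ⟨hcd.le, le_rfl⟩).pow 2).const_mul _).neg
  have hev := (hmid.add hright).eventually_lt_const hneg
  obtain ⟨n, hn⟩ := hev.exists
  have hfin : (∫ s in a..b, ((cutN c d n s * W s) ^ 2 - q s * T n s ^ 2)) < 0 := by
    have hl : (∫ s in a..c, ((cutN c d n s * W s) ^ 2 - q s * T n s ^ 2)) = 0 := by
      have : (∫ s in a..c, ((cutN c d n s * W s) ^ 2 - q s * T n s ^ 2)) = ∫ s in a..c, (0 : ℝ) := by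
        apply intervalIntegral.integral_congr
        intro t ht
        rw [uIcc_of_le hac] at ht
        simp [cutN_left c d n t ht.2, hTl n t ht.2]
      simpa using this
    rw [← intervalIntegral.integral_add_adjacent_intervals
      (hint n a c le_rfl hac (hcd.le.trans hdb)) (hint n c b hac (hcd.le.trans hdb) le_rfl), hl,
      ← intervalIntegral.integral_add_adjacent_intervals
      (hint n c d hac hcd.le hdb) (hint n d b (hac.trans hcd.le) hdb le_rfl), zero_add]
    exact hn
  refine ⟨T n, fun s => cutN c d n s * W s, fun s _ => hTd n s, (hcut n).continuousOn, ?_, ?_, ?_,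
    hfin⟩
  · by_contra! hz
    apply absurd hfin
    rw [not_lt]
    apply intervalIntegral.integral_nonneg (hac.trans (hcd.le.trans hdb))
    intro s hs
    rw [hz s hs]
    have := sq_nonneg (cutN c d n s * W s)
    simpa using this
  · simp [cutN_left c d n a hac]
  · simp [cutN_right c d n b hdb]

lemma jacobi_lemma (a b c d : ℝ) (hac : a ≤ c) (hcd : c < d) (hdb : d ≤ b)
    (u p q : ℝ → ℝ) (hq : ContinuousOn q (Icc a b))
    (hu : ∀ s ∈ Icc a b, HasDerivAt u (p s) s)
    (hp : ∀ s ∈ Icc a b, HasDerivAt p (-(q s * u s)) s)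
    (huc : u c = 0) (hud : u d = 0) (hpd : p d ≠ 0) :
    ∃ τ τ' : ℝ → ℝ,
      (∀ s ∈ Set.Icc a b, HasDerivAt τ (τ' s) s) ∧
      ContinuousOn τ' (Set.Icc a b) ∧
      (∃ s ∈ Set.Icc a b, τ s ≠ 0) ∧
      τ' a = 0 ∧ τ' b = 0 ∧
      (∫ s in a..b, (τ' s ^ 2 - q s * τ s ^ 2)) < 0 := by
  have hsub : Icc c d ⊆ Icc a b := Icc_subset_Icc hac hdb
  have hqc : ContinuousOn q (Icc c d) := hq.mono hsub
  have hucont : ContinuousOn u (Icc c d) := fun s hs =>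
    (hu s (hsub hs)).continuousAt.continuousWithinAt
  have hpcont : ContinuousOn p (Icc c d) := fun s hs =>
    (hp s (hsub hs)).continuousAt.continuousWithinAt
  set P : ℝ → ℝ := fun s => p (max c (min s d)) with hP
  have hPc : Continuous P := by
    apply hpcont.comp_continuous (by fun_prop)
    intro s
    exact ⟨le_max_left _ _, max_le hcd.le (min_le_right _ _)⟩
  have hPe : ∀ s ∈ Icc c d, P s = p s := by
    intro s hs
    simp [hP, hs.1, hs.2]
  set C : ℝ := (d - c) - (∫ s in c..d, q s * (s - c) ^ 2) - (∫ s in d..b, q s) * (d - c) ^ 2 with hC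
  -- choose ε
  obtain ⟨ε, hε⟩ : ∃ ε : ℝ, 2 * ε * (p d * (d - c)) + ε ^ 2 * C < 0 := by
    set k := p d * (d - c) with hk
    have hk0 : k ≠ 0 := mul_ne_zero hpd (by linarith)
    refine ⟨- k / (1 + |C|), ?_⟩
    have h1 : 0 < 1 + |C| := by positivity
    have : 2 * (- k / (1 + |C|)) * k + (- k / (1 + |C|)) ^ 2 * C
        = k ^ 2 / (1 + |C|) ^ 2 * (C - 2 * (1 + |C|)) := by
      field_simp
      ring
    rw [this]
    apply mul_neg_of_pos_of_neg (by positivity)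
    linarith [le_abs_self C, abs_nonneg C]
  apply limit_lemma a b c d hac hcd hdb q (fun s => P s + ε) (fun s => u s + ε * (s - c)) hq
    (by fun_prop)
  · intro s hs
    have : (∫ t in c..s, (P t + ε)) = (u s + ε * (s - c)) - (u c + ε * (c - c)) := by
      apply intervalIntegral.integral_eq_sub_of_hasDerivAt (f := fun s => u s + ε * (s - c))
      · intro t ht
        rw [uIcc_of_le hs.1] at ht
        have ht' : t ∈ Icc c d := ⟨ht.1, ht.2.trans hs.2⟩
        rw [hPe t ht']
        have := (hu t (hsub ht')).add (((hasDerivAt_id t).sub_const c).const_mul ε)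
        refine HasDerivAt.congr_deriv this ?_
        ring
      · exact (hPc.add continuous_const).intervalIntegrable _ _
    rw [this, huc]; ring
  · have h1 : (∫ s in c..d, ((P s + ε) ^ 2 - q s * (u s + ε * (s - c)) ^ 2))
        = 2 * ε * (p d * (d - c)) + ε ^ 2 * ((d - c) - ∫ s in c..d, q s * (s - c) ^ 2) := by
      have e1 : (∫ s in c..d, ((P s + ε) ^ 2 - q s * (u s + ε * (s - c)) ^ 2))
        = ∫ s in c..d, ((p s * p s + u s * -(q s * u s) + 2 * ε * (-(q s * u s) * (s - c) + p s))
          + (ε ^ 2 - ε ^ 2 * (q s * (s - c) ^ 2))) := by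
        apply intervalIntegral.integral_congr
        intro s hs
        rw [uIcc_of_le hcd.le] at hs
        simp only [hPe s hs]
        ring
      have hI1 : IntervalIntegrable (fun s => p s * p s + u s * -(q s * u s) +
          2 * ε * (-(q s * u s) * (s - c) + p s)) volume c d := by
        apply ContinuousOn.intervalIntegrable_of_Icc hcd.le
        fun_prop
      have hI2 : IntervalIntegrable (fun s => ε ^ 2 * (q s * (s - c) ^ 2)) volume c d := by
        apply ContinuousOn.intervalIntegrable_of_Icc hcd.le
        fun_prop
      rw [e1, intervalIntegral.integral_add hI1 (intervalIntegrable_const.sub hI2),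
        intervalIntegral.integral_sub intervalIntegrable_const hI2,
        intervalIntegral.integral_const_mul, intervalIntegral.integral_const]
      rw [intervalIntegral.integral_eq_sub_of_hasDerivAt
        (f := fun s => u s * p s + 2 * ε * (p s * (s - c))) _ hI1]
      · simp only [huc, hud, smul_eq_mul]; ring
      · intro s hs
        rw [uIcc_of_le hcd.le] at hs
        have hu' := hu s (hsub hs)
        have hp' := hp s (hsub hs)
        have := (hu'.mul hp').add ((hp'.mul ((hasDerivAt_id s).sub_const c)).const_mul (2 * ε))
        refine HasDerivAt.congr_deriv this ?_
        simp only [id]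
        ring
    have h2 : (∫ s in d..b, -(q s * (u d + ε * (d - c)) ^ 2))
        = - ((∫ s in d..b, q s) * (ε * (d - c)) ^ 2) := by
      rw [intervalIntegral.integral_neg, intervalIntegral.integral_mul_const, hud, zero_add]
    have h3 := add_lt_add_of_lt_of_le hε (le_refl (0 : ℝ))
    calc _ = _ := by rw [h1, h2]
      _ = 2 * ε * (p d * (d - c)) + ε ^ 2 * C := by rw [hC]; ring
      _ < 0 := hε


theorem stmt_17 (a b : ℝ) (hab : a < b) (V : ℝ → ℝ) (hV : ContDiff ℝ 2 V)
    (θ θ' θ'' : ℝ → ℝ)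
    (hθ1 : ∀ s ∈ Set.Icc a b, HasDerivAt θ (θ' s) s)
    (hθ2 : ∀ s ∈ Set.Icc a b, HasDerivAt θ' (θ'' s) s)
    (hθc : ContinuousOn θ'' (Set.Icc a b))
    (hEL : ∀ s ∈ Set.Icc a b, θ'' s + deriv V (θ s) = 0)
    (hVa : deriv V (θ a) ≠ 0) (hVb : deriv V (θ b) ≠ 0)
    (hnosim : ∀ s ∈ Set.Icc a b, ¬(θ' s = 0 ∧ deriv V (θ s) = 0))
    (hVnodeg : ∀ x : ℝ, ¬(deriv V x = 0 ∧ deriv (deriv V) x = 0))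
    (hZh : {s : ℝ | s ∈ Set.Icc a b ∧ θ' s = 0}.Finite)
    (hZm : {s : ℝ | s ∈ Set.Icc a b ∧ deriv V (θ s) = 0 ∧
      0 < deriv (deriv V) (θ s)}.Finite)
    (hZM : {s : ℝ | s ∈ Set.Icc a b ∧ deriv V (θ s) = 0 ∧
      deriv (deriv V) (θ s) < 0}.Finite)
    (s₁ s₂ : ℝ) (hs₁ : s₁ ∈ Set.Icc a b) (hs₂ : s₂ ∈ Set.Icc a b)
    (hne : s₁ ≠ s₂) (hz₁ : θ' s₁ = 0) (hz₂ : θ' s₂ = 0) :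
    ∃ τ τ' : ℝ → ℝ,
      (∀ s ∈ Set.Icc a b, HasDerivAt τ (τ' s) s) ∧
      ContinuousOn τ' (Set.Icc a b) ∧
      (∃ s ∈ Set.Icc a b, τ s ≠ 0) ∧
      τ' a = 0 ∧ τ' b = 0 ∧
      (∫ s in a..b, (τ' s ^ 2 - deriv (deriv V) (θ s) * τ s ^ 2)) < 0 := by
  have hV1 : ContDiff ℝ 1 (deriv V) :=
    (contDiff_succ_iff_deriv (n := 1) (f := V)).1 (by simpa [one_add_one_eq_two] using hV) |>.2.2
  have hV1d : ∀ x, HasDerivAt (deriv V) (deriv (deriv V) x) x := fun x =>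
    (hV1.differentiable (by norm_num) x).hasDerivAt
  have hV2 : Continuous (deriv (deriv V)) := hV1.continuous_deriv le_rfl
  have key : ∀ c d : ℝ, c ∈ Set.Icc a b → d ∈ Set.Icc a b → c < d → θ' c = 0 → θ' d = 0 → _ :=
    fun c d hc hd hcd hzc hzd => jacobi_lemma a b c d hc.1 hcd hd.2 θ' (fun s => -deriv V (θ s))
      (fun s => deriv (deriv V) (θ s))
      (hV2.comp_continuousOn fun s hs => (hθ1 s hs).continuousAt.continuousWithinAt)
      (fun s hs => by
        have h := hθ2 s hs
        rwa [eq_neg_of_add_eq_zero_left (hEL s hs)] at h)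
      (fun s hs => ((hV1d (θ s)).comp s (hθ1 s hs)).neg)
      hzc hzd (fun h => hnosim d hd ⟨hzd, neg_eq_zero.1 h⟩)
  rcases lt_or_gt_of_ne hne with h | h
  · exact key s₁ s₂ hs₁ hs₂ h hz₁ hz₂
  · exact key s₂ s₁ hs₂ hs₁ h hz₂ hz₁
end
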